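/- Let n ≥ 2 and 2 ≤ p ≤ n. Let u : ℝⁿ → ℝ be a smooth entire p-plurisubharmonic function which has quadratic growth and solves M_p(D²u(x)) = 1 for all x ∈ ℝⁿ. Assume there is a uniform constant A > 0 such that for every x ∈ ℝⁿ and every (p−1)-tuple of indices 1 ≤ i₁ < ⋯ < i_{p−1} ≤ n one has λ_{i₁}(D²u(x)) + ⋯ + λ_{i_{p−1}}(D²u(x)) ≥ −A. Then u is a quadratic polynomial, i.e. there exist a symmetric matrix A', a vector b ∈ ℝⁿ and c ∈ ℝ with u(x) = ½ xᵀA'x + b·x + c for all x. -/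

import Mathlib

open scoped BigOperators

noncomputable section

/-- The positive orthant `Γₙ = (0,∞)ⁿ` in `ℝⁿ`. -/
def PosOrthant (n : ℕ) : Set (Fin n → ℝ) := {lam | ∀ i, 0 < lam i}

/-- A convex invariant cone: an open cone `Γ ⊆ ℝⁿ` with vertex at the origin, `Γ ≠ ℝⁿ`,
which is convex, satisfies `Γ + Γₙ ⊆ Γ`, and is invariant under permutations of coordinates. -/
def IsConvexInvariantCone {n : ℕ} (Γ : Set (Fin n → ℝ)) : Prop :=
  IsOpen Γ ∧ Γ ≠ Set.univ ∧ Convex ℝ Γ ∧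
    (∀ lam ∈ Γ, ∀ t : ℝ, 0 < t → t • lam ∈ Γ) ∧
    (∀ lam ∈ Γ, ∀ tau ∈ PosOrthant n, lam + tau ∈ Γ) ∧
    (∀ lam ∈ Γ, ∀ σ : Equiv.Perm (Fin n), lam ∘ σ ∈ Γ)

/-- The partial derivative `∂f/∂λᵢ(λ)`. -/
def fpd {n : ℕ} (f : (Fin n → ℝ) → ℝ) (i : Fin n) (lam : Fin n → ℝ) : ℝ :=
  fderiv ℝ f lam (Pi.single i 1)

/-- A concave elliptic Hessian operator on a convex invariant cone `Γ`:
a `C²`, permutation-invariant, concave function `f` on `Γ` which is elliptic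
(`∂f/∂λᵢ > 0`), positive, and positively homogeneous of degree one. -/
def IsConcaveEllipticHessianOp {n : ℕ} (Γ : Set (Fin n → ℝ)) (f : (Fin n → ℝ) → ℝ) : Prop :=
  ContDiffOn ℝ 2 f Γ ∧ ConcaveOn ℝ Γ f ∧
    (∀ lam ∈ Γ, ∀ σ : Equiv.Perm (Fin n), f (lam ∘ σ) = f lam) ∧
    (∀ lam ∈ Γ, ∀ i, 0 < fpd f i lam) ∧
    (∀ lam ∈ Γ, 0 < f lam) ∧
    (∀ lam ∈ Γ, ∀ t : ℝ, 0 < t → f (t • lam) = t * f lam)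

/-- Condition N: whenever `λ ∈ Γ` satisfies `f(λ) = 1` and `Σᵢ ∂f/∂λᵢ(λ) ≤ C` for some `C > 0`,
then `∂f/∂λᵢ(λ) ≥ 1/(N₁ C^{N₂})` for every `i`. -/
def ConditionN {n : ℕ} (Γ : Set (Fin n → ℝ)) (f : (Fin n → ℝ) → ℝ) (N₁ N₂ : ℝ) : Prop :=
  ∀ lam ∈ Γ, f lam = 1 → ∀ C : ℝ, 0 < C → (∑ i, fpd f i lam) ≤ C →
    ∀ i, 1 / (N₁ * C ^ N₂) ≤ fpd f i lam

/-- The Hessian matrix `D²u(x)`. -/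
def hessianMatrix {n : ℕ} (u : EuclideanSpace ℝ (Fin n) → ℝ) (x : EuclideanSpace ℝ (Fin n)) :
    Matrix (Fin n) (Fin n) ℝ :=
  fun i j => iteratedFDeriv ℝ 2 u x ![EuclideanSpace.single i 1, EuclideanSpace.single j 1]

/-- The vector of eigenvalues `λ(D²u(x))` of the Hessian of `u` at `x`
(junk value `0` if the Hessian matrix fails to be symmetric). -/
def hessEigen {n : ℕ} (u : EuclideanSpace ℝ (Fin n) → ℝ) (x : EuclideanSpace ℝ (Fin n)) :
    Fin n → ℝ :=
  if h : (hessianMatrix u x).IsHermitian then h.eigenvalues else 0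

/-- Condition D for a solution `u` of `F(D²u) = 1` on a set `Ω`: at every point, if an
eigenvalue `λᵢ` of `D²u` exceeds `D₁` then `∂f/∂λᵢ(λ) ⬝ λᵢ ≤ D₂`. -/
def ConditionD {n : ℕ} (f : (Fin n → ℝ) → ℝ) (u : EuclideanSpace ℝ (Fin n) → ℝ)
    (Ω : Set (EuclideanSpace ℝ (Fin n))) (D₁ D₂ : ℝ) : Prop :=
  ∀ x ∈ Ω, ∀ i, D₁ < hessEigen u x i →
    fpd f i (hessEigen u x) * hessEigen u x i ≤ D₂

/-- The `k`-th elementary symmetric polynomial `σ_k` on `ℝⁿ`. -/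
def esymmF (n k : ℕ) (lam : Fin n → ℝ) : ℝ :=
  ∑ s ∈ (Finset.univ : Finset (Fin n)).powersetCard k, ∏ i ∈ s, lam i

/-- The Gårding cone `Γ_k = {λ : σ_j(λ) > 0, j = 1,…,k}`. -/
def GammaK (n k : ℕ) : Set (Fin n → ℝ) :=
  {lam | ∀ j : ℕ, 1 ≤ j → j ≤ k → 0 < esymmF n j lam}

/-- The cone `Γ̂_p` of vectors all of whose sums of `p` distinct coordinates are positive. -/
def GammaHat (n p : ℕ) : Set (Fin n → ℝ) :=
  {lam | ∀ s : Finset (Fin n), s.card = p → 0 < ∑ i ∈ s, lam i}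

/-- The `p`-Monge–Ampère operator `M_p(λ) = ∏_{i₁<⋯<i_p} (λ_{i₁} + ⋯ + λ_{i_p})`. -/
def pMA (n p : ℕ) (lam : Fin n → ℝ) : ℝ :=
  ∏ s ∈ (Finset.univ : Finset (Fin n)).powersetCard p, ∑ i ∈ s, lam i

/-- Quadratic growth: `u(x) ≥ C⁻¹|x|² − C` for some `C > 0`. -/
def QuadraticGrowth {n : ℕ} (u : EuclideanSpace ℝ (Fin n) → ℝ) : Prop :=
  ∃ C : ℝ, 0 < C ∧ ∀ x, C⁻¹ * ‖x‖ ^ 2 - C ≤ u x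

/-- `u` is a quadratic polynomial: `u(x) = ½ xᵀAx + b·x + c` with `A` symmetric. -/
def IsQuadraticPolynomial {n : ℕ} (u : EuclideanSpace ℝ (Fin n) → ℝ) : Prop :=
  ∃ (A : Matrix (Fin n) (Fin n) ℝ) (b : Fin n → ℝ) (c : ℝ), A.IsSymm ∧
    ∀ x, u x = (1 / 2) * (∑ i, ∑ j, A i j * x i * x j) + (∑ i, b i * x i) + c

/-!
The weights `∂ log M_p / ∂λᵢ` of the linearized equation are minimized, over all points and all
orthonormal frames, at the solution itself: by concavity of `log M_p`, every Hessian of the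
solution lies on one side of the supporting hyperplane of its level set. At a maximum of
Pogorelov's function `λ_max (1 - u)^α exp(‖x‖² / 2)` the second-order conditions, weighted by the
linearized equation, contain third-order terms which the lower bound on sums of `p - 1` eigenvalues
makes large enough to absorb the bad terms in every direction of large weight. This bounds the sum
of the weights, hence `λ_max`, on sublevel sets; by quadratic growth and scaling, `D²u` is then
bounded on the whole space.

The equation is now uniformly elliptic, and every `sup D²u(e, e) - D²u(e, e)` is a nonnegative
supersolution with infimum zero. By the weak Harnack principle such functions are small outside a
set of small density, so the suprema for finitely many directions `e` are nearly attained at a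
common point. Comparing traces there shows that all pure second derivatives are constant.
-/

open Filter Topology MeasureTheory Metric Module
open scoped ContDiff Gradient RealInnerProductSpace

section Calculus

variable {E : Type*} [NormedAddCommGroup E] [NormedSpace ℝ E] {f g : E → ℝ} {m k : WithTop ℕ∞}

/-- The derivative of `g` in the direction `v`, as an operator on functions, so that it can be
iterated. -/
def dirDeriv (v : E) (g : E → ℝ) (x : E) : ℝ := fderiv ℝ g x v

/-- The Hessian of `g` at `x` as a bilinear form. It is meant for `C²` functions, for which it is
symmetric. -/
def hess (g : E → ℝ) (x : E) : E →L[ℝ] E →L[ℝ] ℝ := fderiv ℝ (fderiv ℝ g) x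

lemma contDiff_dirDeriv (hg : ContDiff ℝ k g) (hmk : m + 1 ≤ k) (v : E) :
    ContDiff ℝ m (dirDeriv v g) :=
  (hg.fderiv_right hmk).clm_apply contDiff_const

lemma contDiff_hess (hg : ContDiff ℝ k g) (hmk : m + 2 ≤ k) : ContDiff ℝ m (hess g) := by
  have h2 : m + 1 + 1 ≤ k := by rwa [add_assoc, one_add_one_eq_two]
  exact (hg.fderiv_right h2).fderiv_right le_rfl

lemma contDiff_hess_apply (hg : ContDiff ℝ k g) (hmk : m + 2 ≤ k) (v w : E) :
    ContDiff ℝ m (fun x => hess g x v w) :=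
  ((contDiff_hess hg hmk).clm_apply contDiff_const).clm_apply contDiff_const

lemma differentiable_fderiv (hg : ContDiff ℝ 2 g) : Differentiable ℝ (fderiv ℝ g) :=
  (hg.fderiv_right (m := 1) (by norm_num)).differentiable one_ne_zero

lemma hess_apply (hg : ContDiff ℝ 2 g) (x v w : E) :
    hess g x v w = dirDeriv v (dirDeriv w g) x := by
  change _ = fderiv ℝ (fun y => fderiv ℝ g y w) x v
  rw [fderiv_clm_apply (differentiable_fderiv hg x) (by fun_prop)]
  simp [hess]

lemma hess_symm (hg : ContDiff ℝ 2 g) (x v w : E) : hess g x v w = hess g x w v :=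
  (hg.contDiffAt.isSymmSndFDerivAt (by simp)).eq v w

lemma dirDeriv_comm (hg : ContDiff ℝ 2 g) (v w : E) :
    dirDeriv v (dirDeriv w g) = dirDeriv w (dirDeriv v g) := by
  funext x
  rw [← hess_apply hg, hess_symm hg, hess_apply hg]

lemma hess_hess_comm (hg : ContDiff ℝ 4 g) (x v w : E) :
    hess (fun y => hess g y v v) x w w = hess (fun y => hess g y w w) x v v := by
  have h2 : ContDiff ℝ 2 g := hg.of_le (by norm_num)
  have h3 (v : E) : ContDiff ℝ 3 (dirDeriv v g) := contDiff_dirDeriv hg (by norm_num) v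
  have h32 (v : E) : ContDiff ℝ 2 (dirDeriv v g) := (h3 v).of_le (by norm_num)
  rw [hess_apply (contDiff_hess_apply hg (by norm_num) v v),
    hess_apply (contDiff_hess_apply hg (by norm_num) w w)]
  simp_rw [hess_apply h2]
  rw [dirDeriv_comm (h32 v) w v, dirDeriv_comm h2 w v,
    dirDeriv_comm (contDiff_dirDeriv (h3 w) (by norm_num) v) w v, dirDeriv_comm (h32 w) w v]

lemma hasDerivAt_comp_line (hg : Differentiable ℝ g) (x v : E) (t : ℝ) :
    HasDerivAt (fun t : ℝ => g (x + t • v)) (dirDeriv v g (x + t • v)) t := by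
  have hline : HasDerivAt (fun t : ℝ => x + t • v) v t := by
    simpa using ((hasDerivAt_id t).smul_const v).const_add x
  exact (hg _).hasFDerivAt.comp_hasDerivAt t hline

lemma hess_add (hf : ContDiff ℝ 2 f) (hg : ContDiff ℝ 2 g) (x : E) :
    hess (fun y => f y + g y) x = hess f x + hess g x := by
  have : fderiv ℝ (fun y => f y + g y) = fun y => fderiv ℝ f y + fderiv ℝ g y :=
    funext fun y => fderiv_fun_add (hf.differentiable two_ne_zero y)
      (hg.differentiable two_ne_zero y)
  rw [hess, this, fderiv_fun_add (differentiable_fderiv hf x) (differentiable_fderiv hg x)]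
  rfl

lemma hess_const_mul (a : ℝ) (g : E → ℝ) (x : E) :
    hess (fun y => a * g y) x = a • hess g x := by
  have : fderiv ℝ (fun y => a * g y) = a • fderiv ℝ g := fderiv_const_smul_field a
  rw [hess, this, fderiv_const_smul_field (f := fderiv ℝ g), Pi.smul_apply, hess]

lemma hess_comp_const_smul (g : E → ℝ) (r : ℝ) (x : E) :
    hess (fun y => g (r • y)) x = r ^ 2 • hess g (r • x) := by
  have : fderiv ℝ (fun y => g (r • y)) = r • fun y => fderiv ℝ g (r • y) :=
    funext fun y => fderiv_comp_smul r
  rw [hess, this, fderiv_const_smul_field (f := fun y => fderiv ℝ g (r • y)), Pi.smul_apply,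
    fderiv_comp_smul, smul_smul, ← sq, hess]

lemma hess_rescale (g : E → ℝ) {r : ℝ} (hr : r ≠ 0) (x : E) :
    hess (fun y => (r ^ 2)⁻¹ * g (r • y)) x = hess g (r • x) := by
  rw [hess_const_mul, hess_comp_const_smul, inv_smul_smul₀ (pow_ne_zero 2 hr)]

lemma hess_const_sub (a : ℝ) (x : E) : hess (fun y => a - g y) x = -hess g x := by
  have : fderiv ℝ (fun y => a - g y) = fun y => -fderiv ℝ g y :=
    funext fun y => fderiv_const_sub a
  rw [hess, this, fderiv_fun_neg]
  rfl

lemma hess_sum {ι : Type*} {s : Finset ι} {G : ι → E → ℝ} (hG : ∀ i ∈ s, ContDiff ℝ 2 (G i))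
    (x : E) : hess (fun y => ∑ i ∈ s, G i y) x = ∑ i ∈ s, hess (G i) x := by
  have : fderiv ℝ (fun y => ∑ i ∈ s, G i y) = fun y => ∑ i ∈ s, fderiv ℝ (G i) y :=
    funext fun y => fderiv_fun_sum fun i hi => (hG i hi).differentiable two_ne_zero y
  rw [hess, this, fderiv_fun_sum fun i hi => differentiable_fderiv (hG i hi) x]
  rfl

lemma dirDeriv_log (hg : Differentiable ℝ g) (h0 : ∀ x, g x ≠ 0) (v x : E) :
    dirDeriv v (fun y => Real.log (g y)) x = dirDeriv v g x / g x := by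
  simp [dirDeriv, fderiv.log (hg x) (h0 x), div_eq_inv_mul]

lemma hess_log (hg : ContDiff ℝ 2 g) (h0 : ∀ x, g x ≠ 0) (x v : E) :
    hess (fun y => Real.log (g y)) x v v
      = hess g x v v / g x - dirDeriv v (fun y => Real.log (g y)) x ^ 2 := by
  have hd : Differentiable ℝ g := hg.differentiable two_ne_zero
  have hd' : Differentiable ℝ (dirDeriv v g) :=
    (contDiff_dirDeriv (m := 1) hg (by norm_num) v).differentiable one_ne_zero
  have hlog : dirDeriv v (fun y => Real.log (g y)) = fun y => dirDeriv v g y / g y :=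
    funext (dirDeriv_log hd h0 v)
  rw [hess_apply (hg.log h0), hlog, hess_apply hg]
  have hquot : Differentiable ℝ fun y => dirDeriv v g y / g y := fun y => by
    simpa only [div_eq_mul_inv] using (hd' y).fun_mul ((hd y).fun_inv (h0 y))
  have hdiv := (hasDerivAt_comp_line hd' x v 0).fun_div (hasDerivAt_comp_line hd x v 0) (h0 _)
  have hline := hasDerivAt_comp_line hquot x v 0
  have heq := hline.unique hdiv
  simp only [zero_smul, add_zero] at heq
  rw [heq]
  field_simp [h0 x]

lemma deriv_deriv_nonneg_of_isLocalMin {φ φ' : ℝ → ℝ} {a c : ℝ} (hmin : IsLocalMin φ a)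
    (hφ : ∀ᶠ t in 𝓝 a, HasDerivAt φ (φ' t) t) (hφ' : HasDerivAt φ' c a) : 0 ≤ c := by
  by_contra! hc
  have hderiv : deriv φ =ᶠ[𝓝 a] φ' := hφ.mono fun t ht => ht.deriv
  have hmax : IsLocalMax φ a := isLocalMax_of_deriv_deriv_neg
    (by rwa [hderiv.deriv_eq, hφ'.deriv]) hmin.deriv_eq_zero hφ.self_of_nhds.continuousAt
  have hconst : φ =ᶠ[𝓝 a] fun _ => φ a := by
    filter_upwards [hmin, hmax] with t h₁ h₂ using le_antisymm h₂ h₁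
  have hzero : φ' =ᶠ[𝓝 a] fun _ => 0 := by
    filter_upwards [hderiv, hconst.deriv] with t h₁ h₂
    rw [← h₁, h₂, deriv_const]
  exact hc.ne (by rw [← hφ'.deriv, hzero.deriv_eq, deriv_const])

lemma hess_nonneg_of_isLocalMin {x : E} (hg : ContDiff ℝ 2 g) (hmin : IsLocalMin g x) (v : E) :
    0 ≤ hess g x v v := by
  have hd' : Differentiable ℝ (dirDeriv v g) :=
    (contDiff_dirDeriv (m := 1) hg (by norm_num) v).differentiable one_ne_zero
  have hφ' := hasDerivAt_comp_line hd' x v 0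
  rw [hess_apply hg]
  simp only [zero_smul, add_zero] at hφ'
  refine deriv_deriv_nonneg_of_isLocalMin (φ := fun t => g (x + t • v)) ?_
    (Eventually.of_forall (hasDerivAt_comp_line (hg.differentiable two_ne_zero) x v)) hφ'
  exact IsLocalMin.comp_continuous (f := g) (g := fun t : ℝ => x + t • v) (by simpa using hmin)
    (by fun_prop)

end Calculus

section InnerProductCalculus

variable {E : Type*} [NormedAddCommGroup E] [InnerProductSpace ℝ E]

lemma fderiv_norm_sub_sq (y x : E) :
    fderiv ℝ (fun x : E => ‖x - y‖ ^ 2) x = (2 : ℝ) • innerSL ℝ (x - y) := by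
  have h := ((hasFDerivAt_id x).sub_const y).norm_sq.fderiv
  ext v
  simpa using DFunLike.congr_fun h v

lemma hess_norm_sub_sq (y x v w : E) : hess (fun x => ‖x - y‖ ^ 2) x v w = 2 * ⟪v, w⟫ := by
  have h : fderiv ℝ (fun x : E => ‖x - y‖ ^ 2) = fun x => (2 : ℝ) • innerSL ℝ (x - y) :=
    funext (fderiv_norm_sub_sq y)
  have h' : HasFDerivAt (fun x : E => (2 : ℝ) • innerSL ℝ (x - y)) ((2 : ℝ) • innerSL ℝ) x :=
    (((innerSL ℝ).hasFDerivAt (x := x - y)).comp x (hasFDerivAt_sub_const y)).const_smul (2 : ℝ)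
  rw [hess, h, h'.fderiv]
  rfl

lemma contDiff_gradient [CompleteSpace E] {g : E → ℝ} {m k : WithTop ℕ∞} (hg : ContDiff ℝ k g)
    (hmk : m + 1 ≤ k) : ContDiff ℝ m (∇ g) :=
  (InnerProductSpace.toDual ℝ E).symm.contDiff.comp (hg.fderiv_right hmk)

lemma inner_fderiv_gradient [CompleteSpace E] {g : E → ℝ} (hg : ContDiff ℝ 2 g) (x v w : E) :
    ⟪fderiv ℝ (∇ g) x v, w⟫ = hess g x v w := by
  have hgrad : DifferentiableAt ℝ (∇ g) x :=
    (contDiff_gradient (m := 1) hg (by norm_num)).differentiable one_ne_zero x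
  have hinner := fderiv_inner_apply ℝ hgrad (differentiableAt_const w) v
  simp only [inner_gradient_left, fderiv_fun_const, Pi.zero_apply, zero_apply, inner_zero_right,
    zero_add] at hinner
  rw [← hinner, hess_apply hg]
  rfl

end InnerProductCalculus

section Weights

variable {n p : ℕ} {lam mu : Fin n → ℝ} {A K : ℝ} {I : Finset (Fin n)} {i k m : Fin n}

/-- The family of `p`-element sets of indices over which the product `M_p` runs. -/
abbrev indexSets (n p : ℕ) : Finset (Finset (Fin n)) := Finset.univ.powersetCard p

/-- The weight `∂ log M_p / ∂λᵢ = ∑_{I ∋ i} (∑_{j ∈ I} λⱼ)⁻¹` of the `i`-th eigenvalue, that is, the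
coefficients of the linearization of `log M_p` in an eigenbasis. -/
def maWeight (p : ℕ) (lam : Fin n → ℝ) (i : Fin n) : ℝ :=
  ∑ I ∈ indexSets n p with i ∈ I, (∑ j ∈ I, lam j)⁻¹

lemma mem_indexSets : I ∈ indexSets n p ↔ I.card = p := by simp

lemma exists_mem_indexSets (hp : 1 ≤ p) (hpn : p ≤ n) (i : Fin n) :
    ∃ I ∈ indexSets n p, i ∈ I := by
  obtain ⟨I, hiI, -, hcard⟩ := Finset.exists_subsuperset_card_eq (Finset.subset_univ {i})
    (by simpa using hp) (by simpa using hpn)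
  exact ⟨I, mem_indexSets.2 hcard, Finset.singleton_subset_iff.1 hiI⟩

lemma sum_pos_of_mem_gammaHat (hl : lam ∈ GammaHat n p) (hI : I ∈ indexSets n p) :
    0 < ∑ j ∈ I, lam j :=
  hl I (mem_indexSets.1 hI)

lemma sum_maWeight_mul (lam d : Fin n → ℝ) :
    ∑ i, maWeight p lam i * d i = ∑ I ∈ indexSets n p, (∑ i ∈ I, d i) / ∑ j ∈ I, lam j := by
  simp only [maWeight, Finset.sum_mul, div_eq_inv_mul, Finset.mul_sum]
  exact Finset.sum_comm' (by simp [and_comm])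

lemma sum_maWeight_mul_self (hl : lam ∈ GammaHat n p) :
    ∑ i, maWeight p lam i * lam i = n.choose p := by
  rw [sum_maWeight_mul, Finset.sum_congr rfl fun I hI =>
    div_self (sum_pos_of_mem_gammaHat hl hI).ne']
  simp

lemma maWeight_nonneg (hl : lam ∈ GammaHat n p) (i : Fin n) : 0 ≤ maWeight p lam i :=
  Finset.sum_nonneg fun _ hI =>
    inv_nonneg.2 (sum_pos_of_mem_gammaHat hl (Finset.mem_filter.1 hI).1).le

lemma inv_sum_le_maWeight (hl : lam ∈ GammaHat n p) (hI : I ∈ indexSets n p) (hi : i ∈ I) :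
    (∑ j ∈ I, lam j)⁻¹ ≤ maWeight p lam i :=
  Finset.single_le_sum (f := fun I => (∑ j ∈ I, lam j)⁻¹)
    (fun _ hJ => inv_nonneg.2 (sum_pos_of_mem_gammaHat hl (Finset.mem_filter.1 hJ).1).le)
    (Finset.mem_filter.2 ⟨hI, hi⟩)

lemma maWeight_le {a : ℝ} (ha : 0 < a) (h : ∀ I ∈ indexSets n p, i ∈ I → a ≤ ∑ j ∈ I, lam j) :
    maWeight p lam i ≤ n.choose p * a⁻¹ := by
  calc maWeight p lam i ≤ ∑ I ∈ indexSets n p with i ∈ I, a⁻¹ :=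
        Finset.sum_le_sum fun I hI =>
          inv_anti₀ ha (h I (Finset.mem_filter.1 hI).1 (Finset.mem_filter.1 hI).2)
    _ ≤ ∑ _I ∈ indexSets n p, a⁻¹ :=
        Finset.sum_le_sum_of_subset_of_nonneg (Finset.filter_subset _ _)
          fun _ _ _ => (inv_pos.2 ha).le
    _ = n.choose p * a⁻¹ := by simp

lemma card_le_sum_of_prod_eq_one {ι : Type*} {s : Finset ι} {z : ι → ℝ} (hz : ∀ i ∈ s, 0 < z i)
    (hprod : ∏ i ∈ s, z i = 1) : (s.card : ℝ) ≤ ∑ i ∈ s, z i := by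
  have hlog : ∑ i ∈ s, Real.log (z i) = 0 := by
    rw [← Real.log_prod fun i hi => (hz i hi).ne', hprod, Real.log_one]
  have hle : ∑ i ∈ s, Real.log (z i) ≤ ∑ i ∈ s, (z i - 1) :=
    Finset.sum_le_sum fun i hi => Real.log_le_sub_one_of_pos (hz i hi)
  rw [hlog, Finset.sum_sub_distrib] at hle
  simpa using hle

lemma choose_le_sum_maWeight_mul (hl : lam ∈ GammaHat n p) (hm : mu ∈ GammaHat n p)
    (hlam : pMA n p lam = 1) (hmu : pMA n p mu = 1) :
    (n.choose p : ℝ) ≤ ∑ i, maWeight p lam i * mu i := by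
  have hcard : ((indexSets n p).card : ℝ) = n.choose p := by simp
  rw [sum_maWeight_mul, ← hcard]
  refine card_le_sum_of_prod_eq_one (fun I hI =>
    div_pos (sum_pos_of_mem_gammaHat hm hI) (sum_pos_of_mem_gammaHat hl hI)) ?_
  rw [Finset.prod_div_distrib]
  exact (congr_arg₂ (· / ·) hmu hlam).trans (div_one 1)

lemma comp_perm_mem_gammaHat (hm : mu ∈ GammaHat n p) (σ : Equiv.Perm (Fin n)) :
    mu ∘ σ ∈ GammaHat n p := fun I hI => by
  simpa using hm (I.map σ.toEmbedding) (by simpa using hI)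

lemma pMA_comp_perm (mu : Fin n → ℝ) (σ : Equiv.Perm (Fin n)) :
    pMA n p (mu ∘ σ) = pMA n p mu :=
  Finset.prod_equiv σ.finsetCongr (by simp) (by simp)

open Matrix in
lemma choose_le_maWeight_dotProduct_mulVec (hl : lam ∈ GammaHat n p) (hm : mu ∈ GammaHat n p)
    (hlam : pMA n p lam = 1) (hmu : pMA n p mu = 1) {Q : Matrix (Fin n) (Fin n) ℝ}
    (hQ : Q ∈ doublyStochastic ℝ (Fin n)) :
    (n.choose p : ℝ) ≤ maWeight p lam ⬝ᵥ (Q *ᵥ mu) := by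
  have hlin : IsLinearMap ℝ fun Q : Matrix (Fin n) (Fin n) ℝ => maWeight p lam ⬝ᵥ (Q *ᵥ mu) :=
    ⟨fun _ _ => by rw [add_mulVec, dotProduct_add],
      fun _ _ => by rw [smul_mulVec, dotProduct_smul]⟩
  have hperm : {σ.permMatrix ℝ | σ : Equiv.Perm (Fin n)} ⊆
      {Q : Matrix (Fin n) (Fin n) ℝ | (n.choose p : ℝ) ≤ maWeight p lam ⬝ᵥ (Q *ᵥ mu)} := by
    rintro _ ⟨σ, rfl⟩
    rw [Set.mem_ofPred_eq, permMatrix_mulVec]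
    exact choose_le_sum_maWeight_mul hl (comp_perm_mem_gammaHat hm σ) hlam
      ((pMA_comp_perm mu σ).trans hmu)
  rw [← SetLike.mem_coe, doublyStochastic_eq_convexHull_permMatrix] at hQ
  exact convexHull_min hperm (convex_halfSpace_ge hlin _) hQ

lemma inv_pow_choose_le_sum (hl : lam ∈ GammaHat n p) (hlam : pMA n p lam = 1)
    (hK : 1 ≤ K) (hle : ∀ I ∈ indexSets n p, ∑ j ∈ I, lam j ≤ K) (hI : I ∈ indexSets n p) :
    (K ^ n.choose p)⁻¹ ≤ ∑ j ∈ I, lam j := by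
  have hrest : ∏ J ∈ (indexSets n p).erase I, ∑ j ∈ J, lam j ≤ K ^ n.choose p :=
    calc ∏ J ∈ (indexSets n p).erase I, ∑ j ∈ J, lam j
        ≤ ∏ _J ∈ (indexSets n p).erase I, K :=
          Finset.prod_le_prod
            (fun J hJ => (sum_pos_of_mem_gammaHat hl (Finset.mem_of_mem_erase hJ)).le)
            (fun J hJ => hle J (Finset.mem_of_mem_erase hJ))
      _ = K ^ ((indexSets n p).erase I).card := Finset.prod_const K
      _ ≤ K ^ n.choose p := by
          refine pow_le_pow_right₀ hK ((Finset.card_erase_le).trans_eq ?_)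
          simp
  have hmul : (∑ j ∈ I, lam j) * ∏ J ∈ (indexSets n p).erase I, ∑ j ∈ J, lam j = 1 :=
    (Finset.mul_prod_erase (indexSets n p) (fun J => ∑ j ∈ J, lam j) hI).trans hlam
  have hpos := sum_pos_of_mem_gammaHat hl hI
  rw [inv_le_iff_one_le_mul₀ (by positivity)]
  exact hmul.symm.le.trans (by gcongr)

lemma exists_maWeight_bounds (hp : 1 ≤ p) (hpn : p ≤ n) (hK : 1 ≤ K) :
    ∃ c C : ℝ, 0 < c ∧ 0 < C ∧ ∀ lam ∈ GammaHat n p, pMA n p lam = 1 →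
      (∀ i, lam i ≤ K) → ∀ i, maWeight p lam i ∈ Set.Icc c C := by
  have hp' : (1 : ℝ) ≤ p := by exact_mod_cast hp
  have hL : 1 ≤ p * K := one_le_mul_of_one_le_of_one_le hp' hK
  have hchoose : 0 < n.choose p := Nat.choose_pos hpn
  refine ⟨(p * K)⁻¹, n.choose p * (((p * K) ^ n.choose p)⁻¹)⁻¹, by positivity, by positivity,
    fun lam hl hlam hle i => ?_⟩
  have hsum : ∀ I ∈ indexSets n p, ∑ j ∈ I, lam j ≤ p * K := fun I hI => by
    simpa [mem_indexSets.1 hI] using Finset.sum_le_card_nsmul I lam K fun j _ => hle j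
  constructor
  · obtain ⟨I, hI, hi⟩ := exists_mem_indexSets hp hpn i
    exact (inv_anti₀ (sum_pos_of_mem_gammaHat hl hI) (hsum I hI)).trans
      (inv_sum_le_maWeight hl hI hi)
  · exact maWeight_le (by positivity) fun I hI _ =>
      inv_pow_choose_le_sum hl hlam hL hsum hI

lemma sub_le_sum_of_mem (hA : ∀ s : Finset (Fin n), s.card = p - 1 → -A ≤ ∑ i ∈ s, lam i)
    (hI : I ∈ indexSets n p) (hk : k ∈ I) : lam k - A ≤ ∑ i ∈ I, lam i := by
  have := hA (I.erase k) (by rw [Finset.card_erase_of_mem hk, mem_indexSets.1 hI])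
  rw [← Finset.add_sum_erase I lam hk]
  linarith

lemma maWeight_mul_le {a t : ℝ} (ha : 0 < a) (ht : 0 < t)
    (h : ∀ I ∈ indexSets n p, k ∈ I → t / a ≤ ∑ j ∈ I, lam j) :
    maWeight p lam k * t ≤ a * n.choose p := by
  calc maWeight p lam k * t ≤ n.choose p * (t / a)⁻¹ * t :=
        mul_le_mul_of_nonneg_right (maWeight_le (by positivity) h) ht.le
    _ = a * n.choose p := by field_simp

lemma maWeight_mul_self_le (hA : ∀ s : Finset (Fin n), s.card = p - 1 → -A ≤ ∑ i ∈ s, lam i)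
    (hk : 0 < lam k) (hAk : 2 * A ≤ lam k) : maWeight p lam k * lam k ≤ 2 * n.choose p :=
  maWeight_mul_le two_pos hk fun I hI hkI => by
    linarith [sub_le_sum_of_mem hA hI hkI]

lemma exists_div_card_le_of_sum_pos {ι : Type*} {I : Finset ι} {lam : ι → ℝ}
    {i : ι} {a : ℝ} (hsum : 0 < ∑ j ∈ I, lam j) (hi : i ∈ I) (ha : 0 ≤ a) (hia : lam i ≤ -a) :
    ∃ j ∈ I, a / I.card ≤ lam j := by
  have hcard : (0 : ℝ) < I.card := by exact_mod_cast Finset.card_pos.2 ⟨i, hi⟩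
  classical
  by_contra! hlt
  have hrest : ∑ j ∈ I.erase i, lam j ≤ ∑ _j ∈ I, a / I.card :=
    (Finset.sum_le_sum fun j hj => (hlt j (Finset.mem_of_mem_erase hj)).le).trans
      (Finset.sum_le_sum_of_subset_of_nonneg (Finset.erase_subset i I) fun _ _ _ => by positivity)
  rw [Finset.sum_const, nsmul_eq_mul, mul_div_cancel₀ _ hcard.ne'] at hrest
  rw [← Finset.add_sum_erase I lam hi] at hsum
  linarith

lemma maWeight_mul_le_of_le_neg (hp : 1 ≤ p) (hl : lam ∈ GammaHat n p)
    (hA : ∀ s : Finset (Fin n), s.card = p - 1 → -A ≤ ∑ i ∈ s, lam i)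
    (hpos : 0 < lam m) (hbig : 16 * p * A ≤ lam m) (hneg : lam i ≤ -(lam m / 8)) :
    maWeight p lam i * lam m ≤ 16 * p * n.choose p := by
  have : (0 : ℝ) < p := by exact_mod_cast hp
  refine maWeight_mul_le (by positivity) hpos fun I hI hiI => ?_
  obtain ⟨j, hj, hle⟩ :=
    exists_div_card_le_of_sum_pos (sum_pos_of_mem_gammaHat hl hI) hiI (by positivity) hneg
  rw [mem_indexSets.1 hI] at hle
  have hAle : A ≤ lam m / (16 * p) := by rw [le_div_iff₀ (by positivity)]; linarith
  have hhalf : lam m / 8 / p = 2 * (lam m / (16 * p)) := by field_simp; norm_num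
  linarith [sub_le_sum_of_mem hA hI hj]

lemma maWeight_mul_le_or_le_quotient (hp : 2 ≤ p) (hl : lam ∈ GammaHat n p) (hA0 : 0 < A)
    (hA : ∀ s : Finset (Fin n), s.card = p - 1 → -A ≤ ∑ i ∈ s, lam i)
    (hm : ∀ i, lam i ≤ lam m) (hbig : 16 * p * A ≤ lam m) (i : Fin n) :
    maWeight p lam i * lam m ≤ 16 * p * n.choose p ∨
      lam i < lam m ∧ 5 / 4 * maWeight p lam i ≤
        2 * lam m * ((maWeight p lam i - maWeight p lam m) / (lam m - lam i)) := by
  have hp' : (2 : ℝ) ≤ p := by exact_mod_cast hp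
  have hpos : 0 < lam m := lt_of_lt_of_le (by positivity) hbig
  have hAm : 2 * A ≤ lam m := by nlinarith
  have hchoose : (2 : ℝ) * n.choose p ≤ p * n.choose p := by gcongr
  have hfm := maWeight_mul_self_le hA hpos hAm
  refine or_iff_not_imp_left.2 fun hfi => ?_
  have hlow : -(lam m / 8) < lam i :=
    lt_of_not_ge fun hneg => hfi (maWeight_mul_le_of_le_neg (by lia) hl hA hpos hbig hneg)
  rw [not_le] at hfi
  have hlt : lam i < lam m := by
    refine (hm i).lt_of_ne fun heq => hfi.not_ge ?_
    have hfi' := maWeight_mul_self_le hA (heq ▸ hpos) (heq ▸ hAm)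
    rw [heq] at hfi'
    nlinarith
  have hnonneg : 0 ≤ maWeight p lam i := maWeight_nonneg hl i
  have hfm16 : maWeight p lam m ≤ maWeight p lam i / 16 :=
    le_of_mul_le_mul_right (by nlinarith) hpos
  refine ⟨hlt, ?_⟩
  rw [mul_div_assoc', le_div_iff₀ (sub_pos.2 hlt)]
  calc 5 / 4 * maWeight p lam i * (lam m - lam i)
      ≤ 5 / 4 * maWeight p lam i * (9 / 8 * lam m) := by gcongr; linarith
    _ ≤ 2 * lam m * (15 / 16 * maWeight p lam i) := by nlinarith [mul_nonneg hnonneg hpos.le]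
    _ ≤ 2 * lam m * (maWeight p lam i - maWeight p lam m) := by gcongr; linarith

lemma inv_sum_le_sum_maWeight (hp : 1 ≤ p) (hl : lam ∈ GammaHat n p) (hI : I ∈ indexSets n p) :
    (∑ j ∈ I, lam j)⁻¹ ≤ ∑ i, maWeight p lam i := by
  obtain ⟨i, hi⟩ : I.Nonempty := by
    rw [← Finset.card_pos, mem_indexSets.1 hI]
    exact hp
  exact (inv_sum_le_maWeight hl hI hi).trans
    (Finset.single_le_sum (fun i _ => maWeight_nonneg hl i) (Finset.mem_univ i))

lemma prod_inv_sum_le_pow (hp : 1 ≤ p) (hl : lam ∈ GammaHat n p)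
    {S : Finset (Finset (Fin n))} (hS : S ⊆ indexSets n p) :
    ∏ I ∈ S, (∑ j ∈ I, lam j)⁻¹ ≤ (1 + ∑ i, maWeight p lam i) ^ n.choose p := by
  have hsum : 0 ≤ ∑ i, maWeight p lam i := Finset.sum_nonneg fun i _ => maWeight_nonneg hl i
  calc ∏ I ∈ S, (∑ j ∈ I, lam j)⁻¹ ≤ ∏ I ∈ S, (1 + ∑ i, maWeight p lam i) :=
        Finset.prod_le_prod
          (fun I hI => inv_nonneg.2 (sum_pos_of_mem_gammaHat hl (hS hI)).le)
          (fun I hI => by linarith [inv_sum_le_sum_maWeight hp hl (hS hI)])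
    _ = (1 + ∑ i, maWeight p lam i) ^ S.card := Finset.prod_const _
    _ ≤ (1 + ∑ i, maWeight p lam i) ^ n.choose p := by
        refine pow_le_pow_right₀ (by linarith) ((Finset.card_le_card hS).trans_eq ?_)
        simp

lemma half_le_pow_sum_maWeight (hp : 1 ≤ p) (hpn : p ≤ n) (hl : lam ∈ GammaHat n p)
    (hlam : pMA n p lam = 1)
    (hA : ∀ s : Finset (Fin n), s.card = p - 1 → -A ≤ ∑ i ∈ s, lam i)
    (hAm : 2 * A ≤ lam m) (h2 : 2 ≤ lam m) :
    lam m / 2 ≤ (1 + ∑ i, maWeight p lam i) ^ n.choose p := by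
  set S := {I ∈ indexSets n p | m ∈ I}
  set S' := {I ∈ indexSets n p | m ∉ I}
  have hsplit : (∏ I ∈ S, ∑ j ∈ I, lam j) * ∏ I ∈ S', ∑ j ∈ I, lam j = 1 :=
    (Finset.prod_filter_mul_prod_filter_not _ _ _).trans hlam
  have hge : ∀ I ∈ S, lam m / 2 ≤ ∑ j ∈ I, lam j := fun I hI => by
    obtain ⟨hI, hmI⟩ := Finset.mem_filter.1 hI
    linarith [sub_le_sum_of_mem hA hI hmI]
  obtain ⟨I, hI, hmI⟩ := exists_mem_indexSets hp hpn m
  have hIS : I ∈ S := Finset.mem_filter.2 ⟨hI, hmI⟩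
  calc lam m / 2 ≤ ∑ j ∈ I, lam j := hge I hIS
    _ ≤ (∑ j ∈ I, lam j) * ∏ J ∈ S.erase I, ∑ j ∈ J, lam j :=
        le_mul_of_one_le_right (sum_pos_of_mem_gammaHat hl hI).le <|
          Finset.one_le_prod fun J hJ => by linarith [hge J (Finset.mem_of_mem_erase hJ)]
    _ = ∏ J ∈ S, ∑ j ∈ J, lam j := Finset.mul_prod_erase S (fun J => ∑ j ∈ J, lam j) hIS
    _ = ∏ J ∈ S', (∑ j ∈ J, lam j)⁻¹ := by
        rw [Finset.prod_inv_distrib, eq_inv_of_mul_eq_one_left hsplit]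
    _ ≤ (1 + ∑ i, maWeight p lam i) ^ n.choose p :=
        prod_inv_sum_le_pow hp hl (Finset.filter_subset _ _)

end Weights

section Contact

variable {E : Type*} [NormedAddCommGroup E] [InnerProductSpace ℝ E]
  {ι : Type*} [Fintype ι] {c C k : ℝ} {w W : E → ℝ}

/-- `w` is a supersolution of a linear equation `∑ aᵢⱼ ∂ᵢⱼ w = 0` in nondivergence form whose
coefficient matrix has eigenvalues in `[c, C]`. The coefficients are not required to depend
measurably on the point; an eigenbasis, indexed by `ι`, and the eigenvalues are given instead. -/
def IsSupersolution (ι : Type*) [Fintype ι] (c C : ℝ) (w : E → ℝ) : Prop :=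
  ∀ x, ∃ (b : OrthonormalBasis ι ℝ E) (f : ι → ℝ),
    (∀ i, f i ∈ Set.Icc c C) ∧ ∑ i, f i * hess w x (b i) (b i) ≤ 0

lemma IsSupersolution.add_const (hS : IsSupersolution ι c C w) (t : ℝ) :
    IsSupersolution ι c C fun x => w x + t := by
  have h : fderiv ℝ (fun x => w x + t) = fderiv ℝ w := funext fun x => fderiv_add_const t
  simpa only [IsSupersolution, hess, h] using hS

lemma neg_le_hess_of_isLocalMin_add_paraboloid (hW : ContDiff ℝ 2 W) {y z : E}
    (hmin : IsLocalMin (fun x => W x + k * ‖x - y‖ ^ 2) z) (v : E) :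
    -(2 * k * ‖v‖ ^ 2) ≤ hess W z v v := by
  have hsq : ContDiff ℝ 2 fun x : E => ‖x - y‖ ^ 2 :=
    (contDiff_id.sub contDiff_const).norm_sq ℝ
  have h := hess_nonneg_of_isLocalMin (hW.add (contDiff_const.mul hsq)) hmin v
  rw [hess_add hW (contDiff_const.mul hsq), hess_const_mul] at h
  simp only [add_apply, smul_apply, hess_norm_sub_sq, real_inner_self_eq_norm_sq,
    smul_eq_mul] at h
  linarith

variable [FiniteDimensional ℝ E]

/-- The map sending a point `z` to the vertex of the paraboloid of opening `k` that touches `W`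
from below at `z`. -/
def contactMap (k : ℝ) (W : E → ℝ) (z : E) : E := z + (2 * k)⁻¹ • ∇ W z

lemma contDiff_contactMap (hW : ContDiff ℝ 2 W) : ContDiff ℝ 1 (contactMap k W) :=
  contDiff_id.add ((contDiff_gradient hW (by norm_num)).const_smul _)

lemma inner_fderiv_contactMap (hW : ContDiff ℝ 2 W) (z v v' : E) :
    ⟪fderiv ℝ (contactMap k W) z v, v'⟫ = ⟪v, v'⟫ + (2 * k)⁻¹ * hess W z v v' := by
  have hgrad : DifferentiableAt ℝ (∇ W) z :=
    (contDiff_gradient (m := 1) hW (by norm_num)).differentiable one_ne_zero z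
  have hderiv : HasFDerivAt (contactMap k W)
      (ContinuousLinearMap.id ℝ E + (2 * k)⁻¹ • fderiv ℝ (∇ W) z) z :=
    (hasFDerivAt_id z).add (hgrad.hasFDerivAt.const_smul _)
  rw [hderiv.fderiv]
  simp [inner_add_left, real_inner_smul_left, inner_fderiv_gradient hW]

lemma abs_det_le_trace_pow_of_isPositive {T : E →ₗ[ℝ] E} (hT : T.IsPositive) :
    |LinearMap.det T| ≤ LinearMap.trace ℝ E T ^ finrank ℝ E := by
  have hnonneg := hT.nonneg_eigenvalues rfl
  rw [hT.isSymmetric.det_eq_prod_eigenvalues rfl, hT.isSymmetric.trace_eq_sum_eigenvalues rfl]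
  simp only [RCLike.ofReal_real_eq_id, id_eq]
  rw [abs_of_nonneg (Finset.prod_nonneg fun i _ => hnonneg i)]
  simpa using Finset.prod_le_prod (s := Finset.univ) (fun i _ => hnonneg i)
    fun i hi => Finset.single_le_sum (fun j _ => hnonneg j) hi

lemma gradient_eq_of_isLocalMin_add_paraboloid (hW : Differentiable ℝ W) {y z : E}
    (hmin : IsLocalMin (fun x => W x + k * ‖x - y‖ ^ 2) z) : ∇ W z = (2 * k) • (y - z) := by
  have hsq : Differentiable ℝ fun x : E => ‖x - y‖ ^ 2 := (differentiable_id.sub_const y).norm_sq ℝ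
  have hzero := hmin.fderiv_eq_zero
  rw [fderiv_fun_add (hW z) ((hsq z).const_mul k), fderiv_const_mul (hsq z),
    fderiv_norm_sub_sq] at hzero
  refine ext_inner_right ℝ fun v => ?_
  have hv := DFunLike.congr_fun hzero v
  simp only [add_apply, smul_apply, innerSL_apply_apply, smul_eq_mul, zero_apply] at hv
  rw [inner_gradient_left, real_inner_smul_left, ← neg_sub z y, inner_neg_left]
  linarith

lemma IsSupersolution.exists_sum_hess_log_le (hw : ContDiff ℝ 2 w) (hpos : ∀ x, 0 < w x)
    (hS : IsSupersolution ι c C w) (x : E) :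
    ∃ (b : OrthonormalBasis ι ℝ E) (f : ι → ℝ), (∀ i, f i ∈ Set.Icc c C) ∧
      ∑ i, f i * hess (fun x => Real.log (w x)) x (b i) (b i)
        ≤ -(c * ‖∇ (fun x => Real.log (w x)) x‖ ^ 2) := by
  obtain ⟨b, f, hf, hsum⟩ := hS x
  refine ⟨b, f, hf, ?_⟩
  simp only [hess_log hw (fun y => (hpos y).ne'), mul_sub, Finset.sum_sub_distrib]
  rw [← b.sum_sq_inner_left, Finset.mul_sum]
  have hquot : ∑ i, f i * (hess w x (b i) (b i) / w x) ≤ 0 := by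
    simp only [← mul_div_assoc, ← Finset.sum_div]
    exact div_nonpos_of_nonpos_of_nonneg hsum (hpos x).le
  have hgrad : ∑ i, c * ⟪∇ (fun x => Real.log (w x)) x, b i⟫ ^ 2
      ≤ ∑ i, f i * dirDeriv (b i) (fun x => Real.log (w x)) x ^ 2 := by
    simp only [inner_gradient_left]
    exact Finset.sum_le_sum fun i _ => mul_le_mul_of_nonneg_right (hf i).1 (sq_nonneg _)
  linarith

lemma mul_sum_add_le {f h : ι → ℝ} {s : ℝ} (hf : ∀ i, f i ∈ Set.Icc c C) (hs : 0 ≤ s)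
    (hlow : ∀ i, -s ≤ h i) :
    c * ∑ i, (h i + s) ≤ ∑ i, f i * h i + Fintype.card ι * (s * C) := by
  have hcard : (Fintype.card ι : ℝ) * (s * C) = ∑ _i : ι, s * C := by simp
  rw [hcard, ← Finset.sum_add_distrib, Finset.mul_sum]
  -- termwise `c (hᵢ + s) ≤ fᵢ (hᵢ + s) ≤ fᵢ hᵢ + s C`
  refine Finset.sum_le_sum fun i _ => ?_
  nlinarith [mul_nonneg (sub_nonneg.2 (hf i).1) (neg_le_iff_add_nonneg.1 (hlow i)),
    mul_nonneg (sub_nonneg.2 (hf i).2) hs]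

section ContactPoint

variable {y z : E}

lemma contactMap_eq_of_isLocalMin (hW : Differentiable ℝ W) (hk : 0 < k)
    (hmin : IsLocalMin (fun x => W x + k * ‖x - y‖ ^ 2) z) : contactMap k W z = y := by
  rw [contactMap, gradient_eq_of_isLocalMin_add_paraboloid hW hmin, smul_smul,
    inv_mul_cancel₀ (by positivity), one_smul, add_sub_cancel]

lemma IsSupersolution.exists_sum_hess_add_le (hw : ContDiff ℝ 2 w) (hpos : ∀ x, 0 < w x)
    (hS : IsSupersolution ι c C w) (hk : 0 < k)
    (hmin : IsLocalMin (fun x => Real.log (w x) + k * ‖x - y‖ ^ 2) z) :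
    ∃ b : OrthonormalBasis ι ℝ E,
      c * ∑ i, (hess (fun x => Real.log (w x)) z (b i) (b i) + 2 * k)
        + c * (2 * k * ‖z - y‖) ^ 2 ≤ finrank ℝ E * (2 * k * C) := by
  have hW : ContDiff ℝ 2 fun x => Real.log (w x) := hw.log fun x => (hpos x).ne'
  obtain ⟨b, f, hf, hsum⟩ := hS.exists_sum_hess_log_le hw hpos z
  have hlow : ∀ i, -(2 * k) ≤ hess (fun x => Real.log (w x)) z (b i) (b i) := fun i => by
    simpa using neg_le_hess_of_isLocalMin_add_paraboloid hW hmin (b i)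
  have hgrad := gradient_eq_of_isLocalMin_add_paraboloid (hW.differentiable two_ne_zero) hmin
  rw [hgrad, norm_smul, Real.norm_of_nonneg (by positivity), norm_sub_rev] at hsum
  have hadd := mul_sum_add_le hf (by positivity) hlow
  rw [← finrank_eq_card_basis b.toBasis] at hadd
  exact ⟨b, by linarith⟩

lemma IsSupersolution.norm_sub_sq_le (hw : ContDiff ℝ 2 w) (hpos : ∀ x, 0 < w x)
    (hS : IsSupersolution ι c C w) (hc : 0 < c) (hk : 0 < k)
    (hmin : IsLocalMin (fun x => Real.log (w x) + k * ‖x - y‖ ^ 2) z) :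
    ‖z - y‖ ^ 2 ≤ finrank ℝ E * C / (2 * c * k) := by
  have hW : ContDiff ℝ 2 fun x => Real.log (w x) := hw.log fun x => (hpos x).ne'
  obtain ⟨b, hb⟩ := hS.exists_sum_hess_add_le hw hpos hk hmin
  have hsum : 0 ≤ ∑ i, (hess (fun x => Real.log (w x)) z (b i) (b i) + 2 * k) :=
    Finset.sum_nonneg fun i _ => by
      simpa [neg_le_iff_add_nonneg] using neg_le_hess_of_isLocalMin_add_paraboloid hW hmin (b i)
  rw [le_div_iff₀ (by positivity)]
  refine le_of_mul_le_mul_left ?_ (show 0 < 2 * k by positivity)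
  nlinarith [mul_nonneg hc.le hsum]

lemma IsSupersolution.abs_det_fderiv_contactMap_le (hw : ContDiff ℝ 2 w) (hpos : ∀ x, 0 < w x)
    (hS : IsSupersolution ι c C w) (hc : 0 < c) (hk : 0 < k)
    (hmin : IsLocalMin (fun x => Real.log (w x) + k * ‖x - y‖ ^ 2) z) :
    |(fderiv ℝ (contactMap k fun x => Real.log (w x)) z).det|
      ≤ (finrank ℝ E * C / c) ^ finrank ℝ E := by
  have hW : ContDiff ℝ 2 fun x => Real.log (w x) := hw.log fun x => (hpos x).ne'
  set T := (fderiv ℝ (contactMap k fun x => Real.log (w x)) z).toLinearMap with hTdef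
  have hT : T.IsPositive := by
    refine (LinearMap.isPositive_iff T).2 ⟨fun v v' => ?_, fun v => ?_⟩
    · rw [hTdef, ContinuousLinearMap.coe_coe, inner_fderiv_contactMap hW,
        hess_symm hW z v v', real_inner_comm v', real_inner_comm (fderiv ℝ _ z v'),
        inner_fderiv_contactMap hW]
    · have hlow := neg_le_hess_of_isLocalMin_add_paraboloid hW hmin v
      have hinv : (2 * k)⁻¹ * (2 * k) = 1 := inv_mul_cancel₀ (by positivity)
      rw [hTdef, ContinuousLinearMap.coe_coe, inner_fderiv_contactMap hW,
        real_inner_self_eq_norm_sq]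
      nlinarith [mul_le_mul_of_nonneg_left hlow (show 0 ≤ (2 * k)⁻¹ by positivity)]
  have htrace : LinearMap.trace ℝ E T ≤ finrank ℝ E * C / c := by
    obtain ⟨b, hb⟩ := hS.exists_sum_hess_add_le hw hpos hk hmin
    have hterm : ∀ i, ⟪b i, T (b i)⟫
        = (hess (fun x => Real.log (w x)) z (b i) (b i) + 2 * k) / (2 * k) := fun i => by
      rw [real_inner_comm, hTdef, ContinuousLinearMap.coe_coe, inner_fderiv_contactMap hW,
        real_inner_self_eq_norm_sq, b.norm_eq_one]
      field_simp
      ring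
    rw [T.trace_eq_sum_inner b, Finset.sum_congr rfl fun i _ => hterm i, ← Finset.sum_div,
      div_le_div_iff₀ (by positivity) hc]
    nlinarith [mul_nonneg hc.le (sq_nonneg (2 * k * ‖z - y‖))]
  exact (abs_det_le_trace_pow_of_isPositive hT).trans (pow_le_pow_left₀ hT.trace_nonneg htrace _)

end ContactPoint

end Contact

section MeasureEstimate

variable {E : Type*} [NormedAddCommGroup E] [InnerProductSpace ℝ E] [FiniteDimensional ℝ E]
  {ι : Type*} [Fintype ι] {c C k : ℝ} {w W : E → ℝ}

lemma exists_forall_add_paraboloid_le (hW : Continuous W) {m : ℝ} (hm : ∀ x, m ≤ W x)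
    (hk : 0 < k) (y : E) : ∃ z, ∀ x, W z + k * ‖z - y‖ ^ 2 ≤ W x + k * ‖x - y‖ ^ 2 := by
  have hcont : Continuous fun x => W x + k * ‖x - y‖ ^ 2 := by fun_prop
  refine hcont.exists_forall_le (tendsto_atTop_mono
    (fun x => add_le_add_left (hm x) (k * ‖x - y‖ ^ 2)) (tendsto_atTop_add_const_left _ _ ?_))
  simp only [← dist_eq_norm]
  exact ((tendsto_pow_atTop two_ne_zero).comp
    (tendsto_dist_right_cocompact_atTop y)).const_mul_atTop hk

lemma IsSupersolution.exists_contactMap_eq (hw : ContDiff ℝ 2 w) (hw0 : ∀ x, 0 ≤ w x)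
    (hS : IsSupersolution ι c C w) (hc : 0 < c) (hC : 0 < C) {t r : ℝ} (ht : 0 < t) (hr : 0 < r)
    {xc x1 y : E} (hx1 : dist x1 xc ≤ 3 * r) (hwx1 : w x1 ≤ t) {κ : ℝ}
    (hκ : 2 * (finrank ℝ E + 1) * C / c = κ) (hy : y ∈ ball xc (r / 2)) :
    ∃ z ∈ ball xc r, w z ≤ 2 * Real.exp (16 * κ) * t ∧
      contactMap (κ / r ^ 2) (fun x => Real.log (w x + t)) z = y ∧
      |(fderiv ℝ (contactMap (κ / r ^ 2) fun x => Real.log (w x + t)) z).det|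
        ≤ (finrank ℝ E * C / c) ^ finrank ℝ E := by
  have hpos : ∀ x, 0 < w x + t := fun x => add_pos_of_nonneg_of_pos (hw0 x) ht
  have hwt : ContDiff ℝ 2 fun x => w x + t := hw.add contDiff_const
  have hW : ContDiff ℝ 2 fun x => Real.log (w x + t) := hwt.log fun x => (hpos x).ne'
  have hκ0 : 0 < κ := by rw [← hκ]; positivity
  have hk : 0 < κ / r ^ 2 := by positivity
  obtain ⟨z, hz⟩ := exists_forall_add_paraboloid_le hW.continuous
    (fun x => Real.log_le_log ht (le_add_of_nonneg_left (hw0 x))) hk y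
  have hmin : IsLocalMin (fun x => Real.log (w x + t) + κ / r ^ 2 * ‖x - y‖ ^ 2) z :=
    Eventually.of_forall hz
  have hdist : dist z y < r / 2 := by
    rw [dist_eq_norm]
    refine lt_of_pow_lt_pow_left₀ 2 (by positivity)
      (((hS.add_const t).norm_sub_sq_le hwt hpos hc hk hmin).trans_lt ?_)
    rw [div_lt_iff₀ (by positivity), ← hκ]
    field_simp
    linarith
  refine ⟨z, ?_, ?_, contactMap_eq_of_isLocalMin (hW.differentiable two_ne_zero) hk hmin,
    (hS.add_const t).abs_det_fderiv_contactMap_le hwt hpos hc hk hmin⟩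
  · rw [mem_ball] at hy ⊢
    linarith [dist_triangle z y xc]
  · have hx1y : ‖x1 - y‖ ≤ 4 * r := by
      rw [← dist_eq_norm]
      linarith [dist_triangle_right x1 y xc, mem_ball.1 hy]
    have hparab : κ / r ^ 2 * ‖x1 - y‖ ^ 2 ≤ 16 * κ :=
      calc κ / r ^ 2 * ‖x1 - y‖ ^ 2 ≤ κ / r ^ 2 * (4 * r) ^ 2 := by gcongr
        _ = 16 * κ := by field_simp; norm_num
    have hlog : Real.log (w x1 + t) ≤ Real.log (2 * t) := Real.log_le_log (hpos x1) (by linarith)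
    have hexp : w z + t ≤ Real.exp (Real.log (2 * t) + 16 * κ) := by
      rw [← Real.log_le_iff_le_exp (hpos z)]
      linarith [hz x1, show 0 ≤ κ / r ^ 2 * ‖z - y‖ ^ 2 by positivity]
    rw [Real.exp_add, Real.exp_log (by positivity)] at hexp
    linarith

variable [MeasurableSpace E] [BorelSpace E]

lemma volume_le_of_subset_image {Y : E → E} (hY : Differentiable ℝ Y) {A S : Set E}
    (hA : MeasurableSet A) {D : ℝ} (hdet : ∀ z ∈ A, |(fderiv ℝ Y z).det| ≤ D) (hS : S ⊆ Y '' A) :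
    volume S ≤ ENNReal.ofReal D * volume A :=
  calc volume S ≤ volume (Y '' A) := measure_mono hS
    _ ≤ ∫⁻ z in A, ENNReal.ofReal |(fderiv ℝ Y z).det| :=
      addHaar_image_le_lintegral_abs_det_fderiv volume hA
        fun z _ => (hY z).hasFDerivAt.hasFDerivWithinAt
    _ ≤ ∫⁻ _ in A, ENNReal.ofReal D :=
      setLIntegral_mono measurable_const fun z hz => ENNReal.ofReal_le_ofReal (hdet z hz)
    _ = ENNReal.ofReal D * volume A := setLIntegral_const _ _

lemma volume_ball_mul (x y : E) {a : ℝ} (ha : 0 < a) (r : ℝ) :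
    volume (ball x (a * r)) = ENNReal.ofReal (a ^ finrank ℝ E) * volume (ball y r) := by
  rw [Measure.addHaar_ball_mul_of_pos volume x ha, Measure.addHaar_ball_center volume y]

lemma exists_volume_ball_le_of_isSupersolution (ι E : Type*) [Fintype ι] [NormedAddCommGroup E]
    [InnerProductSpace ℝ E] [FiniteDimensional ℝ E] [MeasurableSpace E] [BorelSpace E]
    (hc : 0 < c) (hC : 0 < C) :
    ∃ M μ : ℝ, 1 ≤ M ∧ 0 < μ ∧ ∀ w : E → ℝ, ContDiff ℝ 2 w → (∀ x, 0 ≤ w x) →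
      IsSupersolution ι c C w → ∀ t r : ℝ, 0 < t → 0 < r → ∀ xc x1 : E, dist x1 xc ≤ 3 * r →
      w x1 ≤ t →
      ENNReal.ofReal μ * volume (ball xc r) ≤ volume ({z | w z ≤ M * t} ∩ ball xc r) := by
  obtain ⟨κ, hκ⟩ : ∃ κ, 2 * (finrank ℝ E + 1) * C / c = κ := ⟨_, rfl⟩
  obtain ⟨D, hD⟩ : ∃ D, (finrank ℝ E * C / c) ^ finrank ℝ E + 1 = D := ⟨_, rfl⟩
  have hκ0 : 0 < κ := by rw [← hκ]; positivity
  have hD0 : 0 < D := by rw [← hD]; positivity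
  refine ⟨2 * Real.exp (16 * κ), (1 / 2) ^ finrank ℝ E / D,
    by linarith [Real.one_le_exp (show 0 ≤ 16 * κ by positivity)], by positivity,
    fun w hw hw0 hS t r ht hr xc x1 hx1 hwx1 => ?_⟩
  have hY : ContDiff ℝ 1 (contactMap (κ / r ^ 2) fun x => Real.log (w x + t)) :=
    contDiff_contactMap ((hw.add contDiff_const).log
      fun x => (add_pos_of_nonneg_of_pos (hw0 x) ht).ne')
  set Y := contactMap (κ / r ^ 2) fun x => Real.log (w x + t)
  set G := {z | w z ≤ 2 * Real.exp (16 * κ) * t} ∩ ball xc r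
  have hG : MeasurableSet G :=
    (isClosed_le hw.continuous continuous_const).measurableSet.inter measurableSet_ball
  have hdet : MeasurableSet {z | |(fderiv ℝ Y z).det| ≤ D} :=
    (isClosed_le (ContinuousLinearMap.continuous_det.comp
      (hY.continuous_fderiv one_ne_zero)).abs continuous_const).measurableSet
  have hsub : ball xc (1 / 2 * r) ⊆ Y '' (G ∩ {z | |(fderiv ℝ Y z).det| ≤ D}) := fun y hy => by
    rw [one_div_mul_eq_div] at hy
    obtain ⟨z, hzr, hwz, hzy, hzD⟩ := hS.exists_contactMap_eq hw hw0 hc hC ht hr hx1 hwx1 hκ hy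
    exact ⟨z, ⟨⟨hwz, hzr⟩, hzD.trans (by linarith)⟩, hzy⟩
  have harea := (volume_le_of_subset_image (hY.differentiable one_ne_zero) (hG.inter hdet)
    (fun z hz => hz.2) hsub).trans (mul_le_mul_right (measure_mono Set.inter_subset_left) _)
  rw [volume_ball_mul xc xc one_half_pos] at harea
  rw [ENNReal.ofReal_div_of_pos hD0, ← ENNReal.mul_div_right_comm]
  exact ENNReal.div_le_of_le_mul (by rwa [mul_comm (volume G)])

end MeasureEstimate

section Decay

variable {E : Type*} [NormedAddCommGroup E] [InnerProductSpace ℝ E] [FiniteDimensional ℝ E]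
  {ι : Type*} [Fintype ι] {c C : ℝ}

lemma exists_ball_subset_ball_sdiff_of_isClosed {F : Set E} (hF : IsClosed F) {x0 x : E}
    (hx0 : x0 ∈ F) {R : ℝ} (hx : x ∈ ball x0 R \ F) :
    ∃ (y : E) (r : ℝ), 0 < r ∧ r ≤ R ∧ x ∈ closedBall y r ∧ ball y r ⊆ ball x0 R \ F ∧
      ∃ x1 ∈ F, dist x1 y ≤ 3 * r := by
  obtain ⟨x1, hx1, hd⟩ := hF.exists_infDist_eq_dist ⟨x0, hx0⟩ x
  have hpos : 0 < infDist x F := (hF.notMem_iff_infDist_pos ⟨x0, hx0⟩).1 hx.2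
  have hle : infDist x F ≤ dist x x0 := infDist_le_dist_of_mem hx0
  have hxR : dist x x0 < R := hx.1
  set r := infDist x F / 2 with hr
  have hr0 : 0 < r := half_pos hpos
  have hdx : 0 < dist x x0 := hpos.trans_le hle
  -- move from `x` towards `x0` by `r`
  set y := AffineMap.lineMap x x0 (r / dist x x0) with hy
  have hxy : dist x y = r := by
    rw [hy, dist_left_lineMap, Real.norm_of_nonneg (by positivity), div_mul_cancel₀ _ hdx.ne']
  have hyx0 : dist y x0 = dist x x0 - r := by
    have hle1 : r / dist x x0 ≤ 1 := (div_le_one hdx).2 (by linarith)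
    rw [hy, dist_lineMap_right, Real.norm_of_nonneg (sub_nonneg.2 hle1),
      sub_mul, one_mul, div_mul_cancel₀ _ hdx.ne']
  refine ⟨y, r, hr0, by linarith, hxy.le, fun z hz => ⟨?_, fun hzF => ?_⟩, x1, hx1, ?_⟩
  · rw [mem_ball] at hz ⊢
    linarith [dist_triangle z y x0]
  · rw [mem_ball'] at hz
    linarith [infDist_le_dist_of_mem (x := x) hzF, dist_triangle x y z]
  · linarith [dist_triangle_left x1 y x]

section Measure

variable [MeasurableSpace E] [BorelSpace E]

lemma ofReal_div_mul_volume_le_of_forall_exists_ball {F G : Set E} (hG : MeasurableSet G)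
    {μ R : ℝ} (hμ : 0 ≤ μ)
    (hF : ∀ x ∈ F, ∃ (y : E) (r : ℝ), 0 < r ∧ r ≤ R ∧ x ∈ closedBall y r ∧ ball y r ⊆ F ∧
      ENNReal.ofReal μ * volume (ball y r) ≤ volume (G ∩ ball y r)) :
    ENNReal.ofReal (μ / 6 ^ finrank ℝ E) * volume F ≤ volume (F ∩ G) := by
  choose! y r hr hrR hmem hsub hvol using hF
  obtain ⟨s, hsF, hdisj, hcov⟩ := Vitali.exists_disjoint_subfamily_covering_enlargement_closedBall
    F y r R hrR 5 (by norm_num)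
  have hdisj' : s.PairwiseDisjoint fun a => ball (y a) (r a) :=
    hdisj.mono fun a => ball_subset_closedBall
  have hs : s.Countable := hdisj'.countable_of_isOpen (fun a _ => isOpen_ball)
    fun a ha => nonempty_ball.2 (hr a (hsF ha))
  have hcover : F ⊆ ⋃ a ∈ s, ball (y a) (6 * r a) := fun x hx => by
    obtain ⟨a, ha, hxa⟩ := hcov x hx
    refine Set.mem_biUnion ha (closedBall_subset_ball ?_ (hxa (hmem x hx)))
    linarith [hr a (hsF ha)]
  have hspot : ∀ a : s, ENNReal.ofReal (μ / 6 ^ finrank ℝ E) * volume (ball (y a) (6 * r a))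
      ≤ volume (G ∩ ball (y a) (r a)) := fun a => by
    rw [volume_ball_mul _ (y a) (by norm_num), ← mul_assoc,
      ← ENNReal.ofReal_mul (by positivity), div_mul_cancel₀ _ (by positivity)]
    exact hvol a (hsF a.2)
  calc ENNReal.ofReal (μ / 6 ^ finrank ℝ E) * volume F
      ≤ ENNReal.ofReal (μ / 6 ^ finrank ℝ E) * ∑' a : s, volume (ball (y a) (6 * r a)) := by
        gcongr
        exact (measure_mono hcover).trans (measure_biUnion_le volume hs _)
    _ ≤ ∑' a : s, volume (G ∩ ball (y a) (r a)) := by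
        rw [← ENNReal.tsum_mul_left]
        exact ENNReal.tsum_le_tsum hspot
    _ = volume (⋃ a ∈ s, G ∩ ball (y a) (r a)) :=
        (measure_biUnion hs (hdisj'.mono fun a => Set.inter_subset_right)
          fun a _ => hG.inter measurableSet_ball).symm
    _ ≤ volume (F ∩ G) := measure_mono (Set.iUnion₂_subset fun a ha z hz =>
        ⟨hsub a (hsF ha) hz.2, hz.1⟩)

lemma exists_measureReal_superlevel_le (ι E : Type*) [Fintype ι] [NormedAddCommGroup E]
    [InnerProductSpace ℝ E] [FiniteDimensional ℝ E] [MeasurableSpace E] [BorelSpace E]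
    (hc : 0 < c) (hC : 0 < C) :
    ∃ M η : ℝ, 1 ≤ M ∧ 0 < η ∧ η < 1 ∧ ∀ w : E → ℝ, ContDiff ℝ 2 w → (∀ x, 0 ≤ w x) →
      IsSupersolution ι c C w → ∀ t : ℝ, 0 < t → ∀ x0, w x0 ≤ t → ∀ R : ℝ,
      volume.real (ball x0 R ∩ {x | M * t < w x})
        ≤ (1 - η) * volume.real (ball x0 R ∩ {x | t < w x}) := by
  obtain ⟨M, μ, hM, hμ, H⟩ := exists_volume_ball_le_of_isSupersolution ι E hc hC
  refine ⟨M, min (μ / 6 ^ finrank ℝ E) (1 / 2), hM, by positivity,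
    (min_le_right _ _).trans_lt (by norm_num), fun w hw hw0 hS t ht x0 hx0 R => ?_⟩
  have hclosed : IsClosed {x | w x ≤ t} := isClosed_le hw.continuous continuous_const
  have hG : MeasurableSet {x | w x ≤ M * t} :=
    (isClosed_le hw.continuous continuous_const).measurableSet
  have hsdiff : ball x0 R ∩ {x | t < w x} = ball x0 R \ {x | w x ≤ t} := by
    ext x; simp
  have hfin : volume (ball x0 R ∩ {x | t < w x}) ≠ ⊤ :=
    measure_ne_top_of_subset Set.inter_subset_left measure_ball_lt_top.ne
  have hspots : ENNReal.ofReal (μ / 6 ^ finrank ℝ E) * volume (ball x0 R ∩ {x | t < w x})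
      ≤ volume (ball x0 R ∩ {x | t < w x} ∩ {x | w x ≤ M * t}) := by
    refine ofReal_div_mul_volume_le_of_forall_exists_ball hG hμ.le (R := R) fun x hx => ?_
    rw [hsdiff] at hx ⊢
    obtain ⟨y, r, hr, hrR, hxy, hsub, x1, hx1, hd⟩ :=
      exists_ball_subset_ball_sdiff_of_isClosed hclosed hx0 hx
    exact ⟨y, r, hr, hrR, hxy, hsub, H w hw hw0 hS t r ht hr y x1 hd hx1⟩
  have hreal := ENNReal.toReal_mono (measure_ne_top_of_subset Set.inter_subset_left hfin) hspots
  rw [ENNReal.toReal_mul, ENNReal.toReal_ofReal (by positivity)] at hreal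
  have hsuper : volume.real (ball x0 R ∩ {x | M * t < w x})
      ≤ volume.real ((ball x0 R ∩ {x | t < w x}) \ {x | w x ≤ M * t}) :=
    measureReal_mono (fun x hx => ⟨⟨hx.1, (le_mul_of_one_le_left ht.le hM).trans_lt hx.2⟩,
      by simpa using hx.2⟩) (measure_ne_top_of_subset Set.sdiff_subset hfin)
  have hmin := mul_le_mul_of_nonneg_right (min_le_left (μ / 6 ^ finrank ℝ E) (1 / 2))
    (measureReal_nonneg (μ := volume) (s := ball x0 R ∩ {x | t < w x}))
  rw [← measureReal_def, ← measureReal_def] at hreal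
  linarith [measureReal_inter_add_sdiff (s := ball x0 R ∩ {x | t < w x}) hG hfin]

lemma IsSupersolution.exists_forall_measureReal_superlevel_le {w : E → ℝ} (hw : ContDiff ℝ 2 w)
    (hw0 : ∀ x, 0 ≤ w x) (hS : IsSupersolution ι c C w) (hc : 0 < c) (hC : 0 < C)
    (hinf : ∀ t > 0, ∃ x, w x ≤ t) {t ε : ℝ} (ht : 0 < t) (hε : 0 < ε) :
    ∃ x0, ∀ R, volume.real (ball x0 R ∩ {x | t < w x}) ≤ ε * volume.real (ball x0 R) := by
  obtain ⟨M, η, hM, hη, hη1, H⟩ := exists_measureReal_superlevel_le ι E hc hC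
  obtain ⟨k, hk⟩ := exists_pow_lt_of_lt_one hε (show 1 - η < 1 by linarith)
  obtain ⟨x0, hx0⟩ := hinf (t / M ^ k) (by positivity)
  refine ⟨x0, fun R => ?_⟩
  have hdecay : ∀ j : ℕ, volume.real (ball x0 R ∩ {x | M ^ j * (t / M ^ k) < w x})
      ≤ (1 - η) ^ j * volume.real (ball x0 R) := by
    intro j
    induction j with
    | zero => simpa using measureReal_mono Set.inter_subset_left measure_ball_lt_top.ne
    | succ j ih =>
      rw [pow_succ', mul_assoc, pow_succ', mul_assoc]
      refine (H w hw hw0 hS _ (by positivity) x0 (hx0.trans ?_) R).trans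
        (mul_le_mul_of_nonneg_left ih (by linarith))
      exact le_mul_of_one_le_left (by positivity) (one_le_pow₀ hM)
  have hlast := hdecay k
  rw [mul_div_cancel₀ _ (by positivity)] at hlast
  exact hlast.trans (mul_le_mul_of_nonneg_right hk.le measureReal_nonneg)

end Measure

lemma exists_forall_le_of_isSupersolution {J : Type*} (s : Finset J) {w : J → E → ℝ} (hc : 0 < c)
    (hC : 0 < C) (hw : ∀ i ∈ s, ContDiff ℝ 2 (w i)) (hw0 : ∀ i ∈ s, ∀ x, 0 ≤ w i x)
    (hS : ∀ i ∈ s, IsSupersolution ι c C (w i)) (hinf : ∀ i ∈ s, ∀ t > 0, ∃ x, w i x ≤ t)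
    {t : ℝ} (ht : 0 < t) : ∃ x, ∀ i ∈ s, w i x ≤ t := by
  borelize E
  obtain ⟨ε, hε⟩ : ∃ ε : ℝ, 1 / (2 ^ finrank ℝ E * (s.card + 1)) = ε := ⟨_, rfl⟩
  have hε0 : 0 < ε := by rw [← hε]; positivity
  choose! x0 hx0 using fun i hi => (hS i hi).exists_forall_measureReal_superlevel_le (hw i hi)
    (hw0 i hi) hc hC (hinf i hi) ht hε0
  set R : ℝ := 1 + ∑ i ∈ s, ‖x0 i‖
  have hR : 0 < R := by positivity
  by_contra! hcon
  have hV : 0 < volume.real (ball (0 : E) R) :=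
    ENNReal.toReal_pos (measure_ball_pos volume _ hR).ne' measure_ball_lt_top.ne
  have hcover : ball (0 : E) R ⊆ ⋃ i ∈ s, ball (x0 i) (2 * R) ∩ {x | t < w i x} := fun x hx => by
    obtain ⟨i, hi, hix⟩ := hcon x
    refine Set.mem_biUnion hi ⟨?_, hix⟩
    have hxi := dist_triangle x 0 (x0 i)
    rw [dist_zero_left] at hxi
    rw [mem_ball] at hx ⊢
    linarith [Finset.single_le_sum (fun i _ => norm_nonneg (x0 i)) hi]
  have hpiece : ∀ i ∈ s, volume.real (ball (x0 i) (2 * R) ∩ {x | t < w i x})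
      ≤ 1 / (s.card + 1) * volume.real (ball (0 : E) R) := fun i hi => by
    refine (hx0 i hi (2 * R)).trans_eq ?_
    rw [Measure.real, volume_ball_mul _ 0 two_pos, ENNReal.toReal_mul,
      ENNReal.toReal_ofReal (by positivity), ← mul_assoc, ← hε, ← measureReal_def]
    congr 1
    field_simp
  have hsum : volume.real (ball (0 : E) R)
      ≤ ∑ _i ∈ s, 1 / (s.card + 1) * volume.real (ball (0 : E) R) :=
    (measureReal_mono hcover ((measure_biUnion_lt_top s.finite_toSet fun i _ =>
      (measure_mono Set.inter_subset_left).trans_lt measure_ball_lt_top).ne)).trans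
      ((measureReal_biUnion_finset_le _ _).trans (Finset.sum_le_sum hpiece))
  have hcard : (s.card : ℝ) * (1 / (s.card + 1)) < 1 := by
    rw [mul_one_div, div_lt_one (by positivity)]
    linarith
  rw [Finset.sum_const, nsmul_eq_mul, ← mul_assoc] at hsum
  exact hsum.not_gt (mul_lt_of_lt_one_left hV hcard)

end Decay

section ConstantHessian

variable {E : Type*} [NormedAddCommGroup E] [InnerProductSpace ℝ E] {ι : Type*} [Fintype ι]
  {c C : ℝ} {u : E → ℝ}

/-- `u` behaves like a solution of a concave uniformly elliptic equation `F(D²u) = 0`: at every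
point the linearization of `F`, given by an eigenbasis `b` and eigenvalues `f i ∈ [c, C]`, supports
the level set of `F` on which all Hessians of `u` lie. -/
def IsConcaveEllipticSolution (ι : Type*) [Fintype ι] (c C : ℝ) (u : E → ℝ) : Prop :=
  ∀ x, ∃ (b : OrthonormalBasis ι ℝ E) (f : ι → ℝ), (∀ i, f i ∈ Set.Icc c C) ∧
    ∀ y, ∑ i, f i * hess u x (b i) (b i) ≤ ∑ i, f i * hess u y (b i) (b i)

/-- The supremum of the second derivative of `u` in the direction `e`. It is meant for functions
whose Hessian is bounded above; otherwise it may take the junk value `0`. -/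
def supHess (u : E → ℝ) (e : E) : ℝ := ⨆ x, hess u x e e

lemma IsConcaveEllipticSolution.isSupersolution (hu : ContDiff ℝ 4 u)
    (h : IsConcaveEllipticSolution ι c C u) (s : ℝ) (e : E) :
    IsSupersolution ι c C fun x => s - hess u x e e := fun x => by
  obtain ⟨b, f, hf, hmin⟩ := h x
  refine ⟨b, f, hf, ?_⟩
  have hterm : ∀ i, ContDiff ℝ 2 fun y => hess u y (b i) (b i) := fun i =>
    contDiff_hess_apply hu (by norm_num) _ _
  have hnonneg := hess_nonneg_of_isLocalMin
    (ContDiff.sum fun i (_ : i ∈ Finset.univ) => contDiff_const.mul (hterm i))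
    (x := x) (Eventually.of_forall hmin) e
  rw [hess_sum fun i _ => contDiff_const.mul (hterm i)] at hnonneg
  simp only [hess_const_mul, sum_apply, smul_apply, smul_eq_mul,
    hess_hess_comm hu x _ e] at hnonneg
  simpa [hess_const_sub] using hnonneg

lemma hess_le_supHess {K : E → ℝ} (hK : ∀ x e, hess u x e e ≤ K e) (x e : E) :
    hess u x e e ≤ supHess u e :=
  le_ciSup (f := fun x => hess u x e e) ⟨K e, Set.forall_mem_range.2 fun y => hK y e⟩ x

lemma eq_add_half_hess_of_forall_hess_eq (hu : ContDiff ℝ 2 u)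
    (hconst : ∀ x v, hess u x v v = hess u 0 v v) (x : E) :
    u x = u 0 + fderiv ℝ u 0 x + hess u 0 x x / 2 := by
  have hline := hasDerivAt_comp_line (hu.differentiable two_ne_zero) 0 x
  have hline' := hasDerivAt_comp_line
    ((contDiff_dirDeriv (m := 1) hu (by norm_num) x).differentiable one_ne_zero) 0 x
  have hfirst : ∀ t : ℝ, dirDeriv x u (0 + t • x) = fderiv ℝ u 0 x + t * hess u 0 x x := fun t => by
    have hzero : ∀ s : ℝ, HasDerivAt (fun s => dirDeriv x u (0 + s • x) - s * hess u 0 x x) 0 s :=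
      fun s => ((hline' s).sub ((hasDerivAt_id s).mul_const _)).congr_deriv
        (by rw [← hess_apply hu, hconst]; ring)
    have := is_const_of_deriv_eq_zero (fun s => (hzero s).differentiableAt)
      (fun s => (hzero s).deriv) t 0
    simp only [dirDeriv, zero_smul, add_zero, zero_mul, sub_zero] at this ⊢
    linarith
  have hzero : ∀ s : ℝ, HasDerivAt
      (fun s => u (0 + s • x) - s * fderiv ℝ u 0 x - s ^ 2 * (hess u 0 x x / 2)) 0 s := fun s =>
    (((hline s).sub ((hasDerivAt_id s).mul_const _)).sub
      ((hasDerivAt_pow 2 s).mul_const _)).congr_deriv (by rw [hfirst]; push_cast; ring)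
  have := is_const_of_deriv_eq_zero (fun s => (hzero s).differentiableAt)
    (fun s => (hzero s).deriv) 1 0
  simp at this
  linarith

variable [FiniteDimensional ℝ E]

lemma sum_hess_eq_trace (hu : ContDiff ℝ 2 u) (b : OrthonormalBasis ι ℝ E) (x : E) :
    ∑ i, hess u x (b i) (b i) = LinearMap.trace ℝ E (fderiv ℝ (∇ u) x) := by
  rw [LinearMap.trace_eq_sum_inner _ b]
  exact Finset.sum_congr rfl fun i _ => by
    rw [ContinuousLinearMap.coe_coe, real_inner_comm, inner_fderiv_gradient hu]

lemma IsConcaveEllipticSolution.exists_supHess_sub_le (hu : ContDiff ℝ 4 u)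
    (h : IsConcaveEllipticSolution ι c C u) (hc : 0 < c) (hC : 0 < C) {K : E → ℝ}
    (hK : ∀ x e, hess u x e e ≤ K e) (s : Finset E) {t : ℝ} (ht : 0 < t) :
    ∃ z, ∀ e ∈ s, supHess u e - t ≤ hess u z e e := by
  have hinf : ∀ e ∈ s, ∀ t > 0, ∃ x, supHess u e - hess u x e e ≤ t := fun e _ t ht => by
    obtain ⟨x, hx⟩ := exists_lt_of_lt_ciSup (sub_lt_self (supHess u e) ht)
    exact ⟨x, sub_le_comm.1 hx.le⟩
  obtain ⟨z, hz⟩ := exists_forall_le_of_isSupersolution s hc hC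
    (w := fun e x => supHess u e - hess u x e e)
    (fun e _ => contDiff_const.sub (contDiff_hess_apply hu (by norm_num) e e))
    (fun e _ x => sub_nonneg.2 (hess_le_supHess hK x e))
    (fun e _ => h.isSupersolution hu _ e) hinf ht
  exact ⟨z, fun e he => sub_le_comm.1 (hz e he)⟩

lemma IsConcaveEllipticSolution.sum_supHess_le {ι₁ ι₂ : Type*} [Fintype ι₁] [Fintype ι₂]
    (hu : ContDiff ℝ 4 u) (h : IsConcaveEllipticSolution ι c C u) (hc : 0 < c) (hC : 0 < C)
    {K : E → ℝ} (hK : ∀ x e, hess u x e e ≤ K e) (a : OrthonormalBasis ι₁ ℝ E)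
    (b : OrthonormalBasis ι₂ ℝ E) : ∑ i, supHess u (a i) ≤ ∑ i, supHess u (b i) := by
  classical
  have hu2 : ContDiff ℝ 2 u := hu.of_le (by norm_num)
  refine le_of_forall_pos_le_add fun δ hδ => ?_
  obtain ⟨t, ht, hδt⟩ : ∃ t > 0, Fintype.card ι₁ * t ≤ δ :=
    ⟨δ / (Fintype.card ι₁ + 1), by positivity, by
      rw [mul_div_assoc', div_le_iff₀ (by positivity)]; linarith⟩
  obtain ⟨z, hz⟩ := h.exists_supHess_sub_le hu hc hC hK (Finset.univ.image a) ht
  have hza : ∀ i, supHess u (a i) ≤ hess u z (a i) (a i) + t := fun i =>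
    sub_le_iff_le_add.1 (hz _ (Finset.mem_image_of_mem a (Finset.mem_univ i)))
  calc ∑ i, supHess u (a i) ≤ ∑ i, (hess u z (a i) (a i) + t) := Finset.sum_le_sum fun i _ => hza i
    _ = ∑ i, hess u z (b i) (b i) + Fintype.card ι₁ * t := by
      rw [Finset.sum_add_distrib, sum_hess_eq_trace hu2, sum_hess_eq_trace hu2]; simp
    _ ≤ ∑ i, supHess u (b i) + δ := add_le_add
      (Finset.sum_le_sum fun i _ => hess_le_supHess hK z _) hδt

lemma IsConcaveEllipticSolution.sum_supHess_sub_le {ι₁ : Type*} [Fintype ι₁]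
    (hu : ContDiff ℝ 4 u) (h : IsConcaveEllipticSolution ι c C u) (hc : 0 < c) (hC : 0 < C)
    {K : E → ℝ} (hK : ∀ x e, hess u x e e ≤ K e) (a : OrthonormalBasis ι₁ ℝ E) (x : E) {t : ℝ}
    (ht : 0 < t) :
    c * ∑ i, (supHess u (a i) - hess u x (a i) (a i)) ≤ C * (Fintype.card ι₁ * t) := by
  classical
  have hu2 : ContDiff ℝ 2 u := hu.of_le (by norm_num)
  obtain ⟨z, hz⟩ := h.exists_supHess_sub_le hu hc hC hK (Finset.univ.image a) ht
  obtain ⟨b, f, hf, hmin⟩ := h z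
  have hchange : ∀ y, ∑ i, (supHess u (a i) - hess u y (a i) (a i))
      = ∑ i, (supHess u (b i) - hess u y (b i) (b i)) := fun y => by
    rw [Finset.sum_sub_distrib, Finset.sum_sub_distrib, sum_hess_eq_trace hu2,
      sum_hess_eq_trace hu2, (h.sum_supHess_le hu hc hC hK a b).antisymm
        (h.sum_supHess_le hu hc hC hK b a)]
  have hgap : ∀ y i, 0 ≤ supHess u (b i) - hess u y (b i) (b i) := fun y i =>
    sub_nonneg.2 (hess_le_supHess hK y _)
  calc c * ∑ i, (supHess u (a i) - hess u x (a i) (a i))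
      ≤ ∑ i, f i * (supHess u (b i) - hess u x (b i) (b i)) := by
        rw [hchange, Finset.mul_sum]
        exact Finset.sum_le_sum fun i _ => mul_le_mul_of_nonneg_right (hf i).1 (hgap x i)
    _ ≤ ∑ i, f i * (supHess u (b i) - hess u z (b i) (b i)) := by
        simp only [mul_sub, Finset.sum_sub_distrib]
        exact sub_le_sub_left (hmin x) _
    _ ≤ C * ∑ i, (supHess u (a i) - hess u z (a i) (a i)) := by
        rw [hchange, Finset.mul_sum]
        exact Finset.sum_le_sum fun i _ => mul_le_mul_of_nonneg_right (hf i).2 (hgap z i)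
    _ ≤ C * (Fintype.card ι₁ * t) := by
        refine mul_le_mul_of_nonneg_left ?_ hC.le
        simpa using Finset.sum_le_sum fun i (_ : i ∈ Finset.univ) =>
          sub_le_comm.1 (hz _ (Finset.mem_image_of_mem a (Finset.mem_univ i)))

lemma IsConcaveEllipticSolution.hess_apply_basis_eq {ι₁ : Type*} [Fintype ι₁]
    (hu : ContDiff ℝ 4 u) (h : IsConcaveEllipticSolution ι c C u) (hc : 0 < c) (hC : 0 < C)
    {K : E → ℝ} (hK : ∀ x e, hess u x e e ≤ K e) (a : OrthonormalBasis ι₁ ℝ E) (x : E) (i : ι₁) :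
    hess u x (a i) (a i) = supHess u (a i) := by
  have hgap : ∀ i ∈ Finset.univ, 0 ≤ supHess u (a i) - hess u x (a i) (a i) := fun i _ =>
    sub_nonneg.2 (hess_le_supHess hK x _)
  have hsum : c * ∑ i, (supHess u (a i) - hess u x (a i) (a i)) ≤ 0 := by
    refine le_of_forall_pos_le_add fun δ hδ => ?_
    refine (h.sum_supHess_sub_le hu hc hC hK a x (t := δ / (C * (Fintype.card ι₁ + 1)))
      (by positivity)).trans ?_
    rw [mul_div_assoc', mul_div_assoc', div_le_iff₀ (by positivity)]
    nlinarith [mul_pos hC hδ]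
  have hzero := (Finset.sum_eq_zero_iff_of_nonneg hgap).1
    (le_antisymm (nonpos_of_mul_nonpos_right hsum hc) (Finset.sum_nonneg hgap)) i
    (Finset.mem_univ i)
  linarith

theorem IsConcaveEllipticSolution.hess_eq (hu : ContDiff ℝ 4 u)
    (h : IsConcaveEllipticSolution ι c C u) (hc : 0 < c) (hC : 0 < C) {K : E → ℝ}
    (hK : ∀ x e, hess u x e e ≤ K e) (x y v : E) : hess u x v v = hess u y v v := by
  rcases eq_or_ne v 0 with rfl | hv
  · simp
  obtain ⟨e, he, hve⟩ : ∃ e : E, ‖e‖ = 1 ∧ v = ‖v‖ • e :=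
    ⟨‖v‖⁻¹ • v, norm_smul_inv_norm hv, (smul_inv_smul₀ (norm_ne_zero_iff.2 hv) v).symm⟩
  have horth : Orthonormal ℝ ((↑) : ({e} : Set E) → E) := by
    simpa [orthonormal_subtype_iff_ite] using he
  obtain ⟨s, a, hs, ha⟩ := horth.exists_orthonormalBasis_extension
  have hunit : ∀ z, hess u z e e = supHess u e := fun z => by
    simpa [ha] using h.hess_apply_basis_eq hu hc hC hK a z ⟨e, hs rfl⟩
  rw [hve]
  simp [hunit]

end ConstantHessian

section Eigenbasis

variable {E : Type*} [NormedAddCommGroup E] [InnerProductSpace ℝ E] {ι : Type*} [Fintype ι]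
  {u : E → ℝ} {x : E} {b : OrthonormalBasis ι ℝ E} {lam : ι → ℝ}

/-- The orthonormal basis `b` diagonalizes the Hessian of `u` at `x`, with eigenvalues `lam`. -/
def IsHessEigenbasis (u : E → ℝ) (x : E) (b : OrthonormalBasis ι ℝ E) (lam : ι → ℝ) : Prop :=
  ∀ i v, hess u x v (b i) = lam i * ⟪b i, v⟫

lemma IsHessEigenbasis.hess_self_eq_sum (hb : IsHessEigenbasis u x b lam) (v : E) :
    hess u x v v = ∑ i, ⟪b i, v⟫ ^ 2 * lam i := by
  calc hess u x v v = hess u x v (∑ i, ⟪b i, v⟫ • b i) := by rw [b.sum_repr']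
    _ = ∑ i, ⟪b i, v⟫ ^ 2 * lam i := by
      simp only [map_sum, map_smul, hb _ v, smul_eq_mul]
      exact Finset.sum_congr rfl fun i _ => by ring

lemma IsHessEigenbasis.hess_apply_basis (hb : IsHessEigenbasis u x b lam) (i : ι) :
    hess u x (b i) (b i) = lam i := by
  simp [hb i]

lemma inner_sq_mem_doublyStochastic [DecidableEq ι] (b c : OrthonormalBasis ι ℝ E) :
    (Matrix.of fun i j => ⟪c j, b i⟫ ^ 2) ∈ doublyStochastic ℝ ι := by
  rw [mem_doublyStochastic_iff_sum]
  refine ⟨fun i j => sq_nonneg _, fun i => ?_, fun j => ?_⟩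
  · simp [c.sum_sq_inner_right]
  · simp [b.sum_sq_inner_left]

end Eigenbasis

section Spectral

variable {n p : ℕ} {u : EuclideanSpace ℝ (Fin n) → ℝ}

lemma hessianMatrix_apply (u : EuclideanSpace ℝ (Fin n) → ℝ) (x : EuclideanSpace ℝ (Fin n))
    (i j : Fin n) : hessianMatrix u x i j
      = hess u x (EuclideanSpace.single i 1) (EuclideanSpace.single j 1) := by
  simp [hessianMatrix, iteratedFDeriv_two_apply, hess]

lemma isHermitian_hessianMatrix (hu : ContDiff ℝ 2 u) (x : EuclideanSpace ℝ (Fin n)) :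
    (hessianMatrix u x).IsHermitian := by
  ext i j
  simp only [Matrix.conjTranspose_apply, star_trivial, hessianMatrix_apply, hess_symm hu x]

lemma hess_eq_dotProduct_mulVec (u : EuclideanSpace ℝ (Fin n) → ℝ)
    (x v w : EuclideanSpace ℝ (Fin n)) :
    hess u x v w = v.ofLp ⬝ᵥ (hessianMatrix u x).mulVec w.ofLp := by
  have hsum (z : EuclideanSpace ℝ (Fin n)) : z = ∑ i, z i • EuclideanSpace.single i (1 : ℝ) := by
    simpa using ((EuclideanSpace.basisFun (Fin n) ℝ).sum_repr z).symm
  conv_lhs => rw [hsum v, hsum w]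
  simp only [map_sum, map_smul, sum_apply, smul_apply, smul_eq_mul, ← hessianMatrix_apply,
    Matrix.mulVec, dotProduct, Finset.mul_sum]
  rw [Finset.sum_comm]
  exact Finset.sum_congr rfl fun i _ => Finset.sum_congr rfl fun j _ => by ring

lemma exists_isHessEigenbasis_hessEigen (hu : ContDiff ℝ 2 u) (x : EuclideanSpace ℝ (Fin n)) :
    ∃ b : OrthonormalBasis (Fin n) ℝ (EuclideanSpace ℝ (Fin n)),
      IsHessEigenbasis u x b (hessEigen u x) := by
  have hh := isHermitian_hessianMatrix hu x
  refine ⟨hh.eigenvectorBasis, fun i v => ?_⟩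
  rw [hess_eq_dotProduct_mulVec, hh.mulVec_eigenvectorBasis, dotProduct_smul, smul_eq_mul,
    hessEigen, dif_pos hh]
  simp [EuclideanSpace.inner_eq_star_dotProduct]

lemma choose_le_sum_maWeight_mul_hess (hu : ContDiff ℝ 2 u)
    (hadm : ∀ x, hessEigen u x ∈ GammaHat n p) (heq : ∀ x, pMA n p (hessEigen u x) = 1)
    (x y : EuclideanSpace ℝ (Fin n))
    (b : OrthonormalBasis (Fin n) ℝ (EuclideanSpace ℝ (Fin n))) :
    (n.choose p : ℝ) ≤ ∑ i, maWeight p (hessEigen u x) i * hess u y (b i) (b i) := by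
  obtain ⟨c, hc⟩ := exists_isHessEigenbasis_hessEigen hu y
  simp only [hc.hess_self_eq_sum]
  exact choose_le_maWeight_dotProduct_mulVec (hadm x) (hadm y) (heq x) (heq y)
    (inner_sq_mem_doublyStochastic b c)

lemma isQuadraticPolynomial_of_forall_hess_eq (hu : ContDiff ℝ 2 u)
    (hconst : ∀ x v, hess u x v v = hess u 0 v v) : IsQuadraticPolynomial u := by
  refine ⟨hessianMatrix u 0, fun i => fderiv ℝ u 0 (EuclideanSpace.single i 1), u 0,
    Matrix.IsSymm.ext fun i j => by simp only [hessianMatrix_apply, hess_symm hu 0], fun x => ?_⟩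
  have hquadratic : ∑ i, ∑ j, hessianMatrix u 0 i j * x i * x j = hess u 0 x x := by
    simp only [hess_eq_dotProduct_mulVec, dotProduct, Matrix.mulVec, Finset.mul_sum]
    exact Finset.sum_congr rfl fun i _ => Finset.sum_congr rfl fun j _ => by ring
  have hlinear : ∑ i, fderiv ℝ u 0 (EuclideanSpace.single i 1) * x i = fderiv ℝ u 0 x := by
    conv_rhs => rw [← (EuclideanSpace.basisFun (Fin n) ℝ).sum_repr x]
    simp [mul_comm]
  rw [hquadratic, hlinear, eq_add_half_hess_of_forall_hess_eq hu hconst]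
  ring

end Spectral

section ThirdOrder

variable {E : Type*} [NormedAddCommGroup E] [InnerProductSpace ℝ E]

lemma dirDeriv_hess_apply {g : E → ℝ} (hg : ContDiff ℝ 3 g) (x e v w : E) :
    dirDeriv e (fun y => hess g y v w) x = hess (dirDeriv e g) x v w := by
  have hg2 : ContDiff ℝ 2 g := hg.of_le (by norm_num)
  rw [hess_apply (contDiff_dirDeriv hg (by norm_num) e), dirDeriv_comm hg2 w e,
    dirDeriv_comm (contDiff_dirDeriv hg (by norm_num) w) v e]
  simp_rw [hess_apply hg2]

lemma hasDerivAt_hess_comp {g : E → ℝ} (hg : ContDiff ℝ 3 g) (x e : E) {v w : ℝ → E} {v' w' : E}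
    {t : ℝ} (hv : HasDerivAt v v' t) (hw : HasDerivAt w w' t) :
    HasDerivAt (fun t : ℝ => hess g (x + t • e) (v t) (w t))
      (hess (dirDeriv e g) (x + t • e) (v t) (w t) + hess g (x + t • e) v' (w t)
        + hess g (x + t • e) (v t) w') t := by
  have hline : HasDerivAt (fun t : ℝ => x + t • e) e t := by
    simpa using ((hasDerivAt_id t).smul_const e).const_add x
  have hdiff : DifferentiableAt ℝ (hess g) (x + t • e) :=
    (contDiff_hess (m := 1) hg (by norm_num)).differentiable one_ne_zero _
  have hthird : fderiv ℝ (hess g) (x + t • e) e (v t) (w t)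
      = hess (dirDeriv e g) (x + t • e) (v t) (w t) := by
    rw [← dirDeriv_hess_apply hg, dirDeriv, fderiv_clm_apply (by fun_prop) (by fun_prop),
      fderiv_clm_apply hdiff (by fun_prop)]
    simp
  have hhess : HasDerivAt (fun t : ℝ => hess g (x + t • e)) (fderiv ℝ (hess g) (x + t • e) e) t :=
    HasFDerivAt.comp_hasDerivAt (l := hess g) (f := fun t : ℝ => x + t • e) t hdiff.hasFDerivAt
      hline
  refine ((hhess.clm_apply hv).clm_apply hw).congr_deriv ?_
  rw [← hthird]
  simp

/-- The generator of the rotations in the plane spanned by `e` and `a`, turning `e` towards `a`. -/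
def planeRotation (e a : E) : E →L[ℝ] E :=
  InnerProductSpace.rankOne ℝ a e - InnerProductSpace.rankOne ℝ e a

lemma planeRotation_apply (e a v : E) : planeRotation e a v = ⟪e, v⟫ • a - ⟪a, v⟫ • e := by
  simp [planeRotation]

variable {ι : Type*} [Fintype ι] {u : E → ℝ} {x : E} {b : OrthonormalBasis ι ℝ E} {f : ι → ℝ}
  {lam : ι → ℝ} {m : ι} {s : ι → ℝ}

lemma inner_sum_smul_basis (b : OrthonormalBasis ι ℝ E) (s : ι → ℝ) (i : ι) :
    ⟪b i, ∑ j, s j • b j⟫ = s i := by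
  rw [b.orthonormal.inner_right_fintype]

lemma planeRotation_apply_basis [DecidableEq ι] (b : OrthonormalBasis ι ℝ E) (m i : ι)
    (s : ι → ℝ) : planeRotation (b m) (∑ j, s j • b j) (b i)
      = (if i = m then 1 else 0 : ℝ) • (∑ j, s j • b j) - s i • b m := by
  rw [planeRotation_apply, real_inner_comm (b i) (∑ j, s j • b j), inner_sum_smul_basis,
    orthonormal_iff_ite.1 b.orthonormal m i]
  simp only [eq_comm]

lemma sum_mul_bilin_planeRotation (B : E →L[ℝ] E →L[ℝ] ℝ) (hB : ∀ v w, B v w = B w v)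
    (b : OrthonormalBasis ι ℝ E) (f s : ι → ℝ) (m : ι) :
    ∑ i, f i * B (b i) (planeRotation (b m) (∑ j, s j • b j) (b i))
      = ∑ i, (f m - f i) * s i * B (b i) (b m) := by
  classical
  have hterm : ∀ i, f i * B (b i) (planeRotation (b m) (∑ j, s j • b j) (b i))
      = (if i = m then f m * B (b m) (∑ j, s j • b j) else 0) - f i * (s i * B (b i) (b m)) :=
    fun i => by
      rw [planeRotation_apply_basis]
      split_ifs with him
      · simp [him, mul_sub]
      · simp
  rw [Finset.sum_congr rfl fun i _ => hterm i, Finset.sum_sub_distrib, Finset.sum_ite_eq',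
    if_pos (Finset.mem_univ m), map_sum, Finset.mul_sum, ← Finset.sum_sub_distrib]
  exact Finset.sum_congr rfl fun i _ => by rw [map_smul, smul_eq_mul, hB (b m)]; ring

lemma IsHessEigenbasis.hess_planeRotation (hb : IsHessEigenbasis u x b lam)
    (hu : ContDiff ℝ 2 u) [DecidableEq ι] (hs : s m = 0) (i : ι) :
    let S := planeRotation (b m) (∑ j, s j • b j)
    hess u x (S (S (b i))) (b i) + hess u x (S (b i)) (S (b i))
      = (if i = m then ∑ j, (lam j - lam m) * s j ^ 2 else 0) + (lam m - lam i) * s i ^ 2 := by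
  intro S
  set a := ∑ j, s j • b j
  have hS : ∀ i, S (b i) = (if i = m then 1 else 0 : ℝ) • a - s i • b m :=
    fun i => planeRotation_apply_basis b m i s
  have hcoef : ∀ i, ⟪b i, a⟫ = s i := inner_sum_smul_basis b s
  have hSa : S a = -(∑ j, s j ^ 2) • b m := by
    have : ⟪a, a⟫ = ∑ j, s j ^ 2 := by
      rw [real_inner_self_eq_norm_sq, ← b.sum_sq_inner_right a]
      simp only [hcoef]
    rw [planeRotation_apply, hcoef, hs, this, zero_smul, zero_sub, neg_smul]
  have haa : hess u x a a = ∑ j, s j ^ 2 * lam j := by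
    simpa only [hcoef] using hb.hess_self_eq_sum a
  have hai : hess u x a (b i) = lam i * s i := by rw [hb, hcoef]
  have ham : hess u x a (b m) = 0 := by rw [hb, hcoef, hs, mul_zero]
  have hma : hess u x (b m) a = 0 := by rw [hess_symm hu, ham]
  have hsub : ∑ j, (lam j - lam m) * s j ^ 2 = ∑ j, s j ^ 2 * lam j - (∑ j, s j ^ 2) * lam m := by
    rw [Finset.sum_mul, ← Finset.sum_sub_distrib]
    exact Finset.sum_congr rfl fun j _ => by ring
  have hSS : S (S (b i)) = -(if i = m then ∑ j, s j ^ 2 else 0) • b m - s i • a := by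
    rw [hS i, map_sub, map_smul, map_smul, hSa, hS m]
    simp [hs]
  rw [hSS, hS i, hsub]
  by_cases him : i = m
  · subst him
    simp [hs, haa, hb.hess_apply_basis]
    ring
  · simp [him, hai, hb.hess_apply_basis]
    ring

lemma IsHessEigenbasis.sum_mul_hess_planeRotation (hb : IsHessEigenbasis u x b lam)
    (hu : ContDiff ℝ 2 u) (f : ι → ℝ) (hs : s m = 0) :
    let S := planeRotation (b m) (∑ j, s j • b j)
    ∑ i, f i * (hess u x (S (S (b i))) (b i) + hess u x (S (b i)) (S (b i)))
      = ∑ i, (f i - f m) * (lam m - lam i) * s i ^ 2 := by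
  classical
  intro S
  simp only [S, hb.hess_planeRotation hu hs, mul_add, mul_ite, mul_zero, Finset.sum_add_distrib,
    Finset.sum_ite_eq', Finset.mem_univ, if_true, Finset.mul_sum]
  rw [← Finset.sum_add_distrib]
  exact Finset.sum_congr rfl fun i _ => by ring

variable [CompleteSpace E]

lemma exists_hasDerivAt_linearIsometryEquiv {S : E →L[ℝ] E} (hS : S ∈ skewAdjoint (E →L[ℝ] E)) :
    ∃ R : ℝ → E ≃ₗᵢ[ℝ] E, (∀ v, R 0 v = v) ∧
      ∀ v t, HasDerivAt (fun t => R t v) (R t (S v)) t := by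
  let _ : NormedAlgebra ℚ (E →L[ℝ] E) := NormedAlgebra.restrictScalars ℚ ℝ _
  exact ⟨fun t => Unitary.linearIsometryEquiv ⟨NormedSpace.exp (t • S),
      NormedSpace.exp_mem_unitary_of_mem_skewAdjoint (skewAdjoint.smul_mem t hS)⟩,
    fun v => by
      change NormedSpace.exp ((0 : ℝ) • S) v = v
      simp,
    fun v t => by
      have h := (hasDerivAt_exp_smul_const (𝕂 := ℝ) S t).clm_apply (hasDerivAt_const t v)
      rw [map_zero, add_zero] at h
      exact h⟩

lemma planeRotation_mem_skewAdjoint (e a : E) : planeRotation e a ∈ skewAdjoint (E →L[ℝ] E) := by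
  rw [skewAdjoint.mem_iff, planeRotation, star_sub, ContinuousLinearMap.star_eq_adjoint,
    ContinuousLinearMap.star_eq_adjoint, InnerProductSpace.adjoint_rankOne,
    InnerProductSpace.adjoint_rankOne, neg_sub]

/-- The point `x` and the frame `b` minimize `∑ i, f i * D²u(y)(b' i, b' i)` over all points `y`
and all orthonormal frames `b'`. For a concave Hessian equation this holds with `b` an eigenbasis
of `D²u(x)` and `f` the linearization of the operator. -/
def IsMinimalFrame (u : E → ℝ) (x : E) (b : OrthonormalBasis ι ℝ E) (f : ι → ℝ) : Prop :=
  ∀ (y : E) (b' : OrthonormalBasis ι ℝ E),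
    ∑ i, f i * hess u x (b i) (b i) ≤ ∑ i, f i * hess u y (b' i) (b' i)

/- The second derivative test along the curve `t ↦ (x + t e, exp(tS) b)`: moving the frame together
with the point produces the third derivatives `D²(∂ₑu)(b i, S b i)`. -/
lemma IsMinimalFrame.sum_nonneg_of_mem_skewAdjoint (hmin : IsMinimalFrame u x b f)
    (hu : ContDiff ℝ 4 u) (e : E) {S : E →L[ℝ] E} (hS : S ∈ skewAdjoint (E →L[ℝ] E)) :
    0 ≤ ∑ i, f i * (hess (dirDeriv e (dirDeriv e u)) x (b i) (b i)
      + 4 * hess (dirDeriv e u) x (b i) (S (b i))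
      + 2 * (hess u x (S (S (b i))) (b i) + hess u x (S (b i)) (S (b i)))) := by
  obtain ⟨R, hR0, hR⟩ := exists_hasDerivAt_linearIsometryEquiv hS
  have hu3 : ContDiff ℝ 3 u := hu.of_le (by norm_num)
  have hue : ContDiff ℝ 3 (dirDeriv e u) := contDiff_dirDeriv hu (by norm_num) e
  refine deriv_deriv_nonneg_of_isLocalMin (a := 0)
    (φ := fun t => ∑ i, f i * hess u (x + t • e) (R t (b i)) (R t (b i)))
    (Eventually.of_forall fun t => ?_)
    (Eventually.of_forall fun t => HasDerivAt.fun_sum fun i _ =>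
      (hasDerivAt_hess_comp hu3 x e (hR (b i) t) (hR (b i) t)).const_mul (f i))
    (HasDerivAt.fun_sum fun i _ => HasDerivAt.const_mul (f i) ?_)
  · simpa [hR0] using hmin (x + t • e) (b.map (R t))
  · refine (((hasDerivAt_hess_comp hue x e (hR (b i) 0) (hR (b i) 0)).add
      (hasDerivAt_hess_comp hu3 x e (hR (S (b i)) 0) (hR (b i) 0))).add
      (hasDerivAt_hess_comp hu3 x e (hR (b i) 0) (hR (S (b i)) 0))).congr_deriv ?_
    simp only [hR0, zero_smul, add_zero]
    rw [hess_symm (hue.of_le (by norm_num)) x (S (b i)) (b i),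
      hess_symm (hu3.of_le (by norm_num)) x (b i) (S (S (b i)))]
    ring

lemma IsMinimalFrame.sum_nonneg (hmin : IsMinimalFrame u x b f) (hb : IsHessEigenbasis u x b lam)
    (hu : ContDiff ℝ 4 u) (hs : s m = 0) :
    0 ≤ ∑ i, f i * hess (dirDeriv (b m) (dirDeriv (b m) u)) x (b i) (b i)
      + ∑ i, (f i - f m) * (2 * (lam m - lam i) * s i ^ 2
        - 4 * s i * hess (dirDeriv (b m) u) x (b i) (b m)) := by
  have hsecond := hmin.sum_nonneg_of_mem_skewAdjoint hu (b m)
    (planeRotation_mem_skewAdjoint (b m) (∑ j, s j • b j))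
  have hum : ContDiff ℝ 2 (dirDeriv (b m) u) := contDiff_dirDeriv hu (by norm_num) _
  have hthird := sum_mul_bilin_planeRotation _ (hess_symm hum x) b f s m
  have hrot := hb.sum_mul_hess_planeRotation (hu.of_le (by norm_num)) f hs
  calc 0 ≤ _ := hsecond
    _ = ∑ i, f i * hess (dirDeriv (b m) (dirDeriv (b m) u)) x (b i) (b i)
        + 4 * ∑ i, (f m - f i) * s i * hess (dirDeriv (b m) u) x (b i) (b m)
        + 2 * ∑ i, (f i - f m) * (lam m - lam i) * s i ^ 2 := by
      rw [← hthird, ← hrot, Finset.mul_sum, Finset.mul_sum, ← Finset.sum_add_distrib,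
        ← Finset.sum_add_distrib]
      exact Finset.sum_congr rfl fun i _ => by ring
    _ = _ := by
      rw [add_assoc, Finset.mul_sum, Finset.mul_sum, ← Finset.sum_add_distrib]
      congr 1
      exact Finset.sum_congr rfl fun i _ => by ring

end ThirdOrder

section GradientBound

variable {q q' q'' : ℝ → ℝ} {K L T : ℝ}

lemma deriv_le_add_mul_of_forall_neg (hq : ∀ t, HasDerivAt q (q' t) t)
    (hq' : ∀ t, HasDerivAt q' (q'' t) t) (hK : ∀ t, q t ≤ q 0 → q'' t ≤ K)
    (hneg : ∀ t ∈ Set.Ico 0 T, q' t < 0) : ∀ t ∈ Set.Icc 0 T, q' t ≤ q' 0 + K * t := by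
  intro t ht
  have hT : (0 : ℝ) ∈ Set.Icc 0 T := ⟨le_rfl, ht.1.trans ht.2⟩
  have hanti : AntitoneOn q (Set.Icc 0 T) :=
    antitoneOn_of_deriv_nonpos (convex_Icc 0 T) (HasDerivAt.continuousOn fun t _ => hq t)
      (fun t _ => (hq t).differentiableAt.differentiableWithinAt) fun t ht => by
        rw [interior_Icc] at ht
        exact (hq t).deriv.trans_le (hneg t ⟨ht.1.le, ht.2⟩).le
  have hslope := (convex_Icc 0 T).image_sub_le_mul_sub_of_deriv_le
    (HasDerivAt.continuousOn fun t _ => hq' t)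
    (fun t _ => (hq' t).differentiableAt.differentiableWithinAt) (C := K) (fun t ht => by
      rw [(hq' t).deriv]
      exact hK t (hanti hT (interior_subset ht) (interior_subset ht).1)) 0 hT t ht ht.1
  linarith

lemma forall_neg_of_deriv_le (hq : ∀ t, HasDerivAt q (q' t) t)
    (hq' : ∀ t, HasDerivAt q' (q'' t) t) (hK : ∀ t, q t ≤ q 0 → q'' t ≤ K)
    (hT : q' 0 + K * T ≤ 0) (hK0 : 0 < K) : ∀ t ∈ Set.Ico 0 T, q' t < 0 := by
  intro t ht
  by_contra! hnonneg
  have hcompact : IsCompact (Set.Icc 0 t ∩ {s | 0 ≤ q' s}) :=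
    isCompact_Icc.inter_right
      (isClosed_le continuous_const (continuous_iff_continuousAt.2 fun s => (hq' s).continuousAt))
  obtain ⟨s, ⟨hst, hs⟩, hleast⟩ :=
    hcompact.exists_isLeast ⟨t, ⟨ht.1, le_rfl⟩, by simpa using hnonneg⟩
  have hbefore : ∀ r ∈ Set.Ico 0 s, q' r < 0 := fun r hr => by
    by_contra! h
    exact hr.2.not_ge (hleast ⟨⟨hr.1, hr.2.le.trans hst.2⟩, by simpa using h⟩)
  have hle := deriv_le_add_mul_of_forall_neg hq hq' hK hbefore s ⟨hst.1, le_rfl⟩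
  have hsT : K * s < K * T := by gcongr; exact hst.2.trans_lt ht.2
  rw [Set.mem_ofPred_eq] at hs
  linarith

lemma sq_deriv_le_of_deriv_deriv_le (hq : ∀ t, HasDerivAt q (q' t) t)
    (hq' : ∀ t, HasDerivAt q' (q'' t) t) (hK : ∀ t, q t ≤ q 0 → q'' t ≤ K) (hK0 : 0 < K)
    (hL : ∀ t, L ≤ q t) (h0 : q' 0 ≤ 0) : q' 0 ^ 2 ≤ 2 * K * (q 0 - L) := by
  set T := -q' 0 / K
  have hT0 : 0 ≤ T := div_nonneg (neg_nonneg.2 h0) hK0.le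
  have hKT : K * T = -q' 0 := mul_div_cancel₀ _ hK0.ne'
  have hq'le := deriv_le_add_mul_of_forall_neg hq hq' hK
    (forall_neg_of_deriv_le hq hq' hK (by linarith) hK0)
  have hφ (t : ℝ) :
      HasDerivAt (fun t => q t - (q' 0 * t + K * t ^ 2 / 2)) (q' t - (q' 0 + K * t)) t := by
    refine ((hq t).sub (((hasDerivAt_id t).const_mul (q' 0)).add
      (((hasDerivAt_pow 2 t).const_mul K).div_const 2))).congr_deriv ?_
    simp
    ring
  have hanti : AntitoneOn (fun t => q t - (q' 0 * t + K * t ^ 2 / 2)) (Set.Icc 0 T) :=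
    antitoneOn_of_deriv_nonpos (convex_Icc 0 T) (HasDerivAt.continuousOn fun t _ => hφ t)
      (fun t _ => (hφ t).differentiableAt.differentiableWithinAt) fun t ht => by
        rw [(hφ t).deriv]
        exact sub_nonpos.2 (hq'le t (interior_subset ht))
  have hqT : q T - (q' 0 * T + K * T ^ 2 / 2) ≤ q 0 := by
    simpa using hanti ⟨le_rfl, hT0⟩ ⟨hT0, le_rfl⟩ hT0
  have hquad : 2 * K * (q' 0 * T + K * T ^ 2 / 2) = -q' 0 ^ 2 := by
    linear_combination (2 * q' 0 + (K * T - q' 0)) * hKT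
  have := mul_le_mul_of_nonneg_left ((hL T).trans (sub_le_iff_le_add.1 hqT))
    (by positivity : 0 ≤ 2 * K)
  linarith

lemma sq_dirDeriv_le_of_hess_le {E : Type*} [NormedAddCommGroup E] [NormedSpace ℝ E] {u : E → ℝ}
    (hu : ContDiff ℝ 2 u) {x v : E} (hL : ∀ y, L ≤ u y) (hK0 : 0 < K)
    (hK : ∀ y, u y ≤ u x → hess u y v v ≤ K) : dirDeriv v u x ^ 2 ≤ 2 * K * (u x - L) := by
  wlog hsign : dirDeriv v u x ≤ 0 generalizing v with H
  · have hneg : dirDeriv (-v) u x = -dirDeriv v u x := by simp [dirDeriv]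
    have := H (v := -v) (fun y hy => by simpa using hK y hy) (by linarith)
    rwa [hneg, neg_sq] at this
  have hline := hasDerivAt_comp_line (hu.differentiable two_ne_zero) x v
  have hline' := hasDerivAt_comp_line
    ((contDiff_dirDeriv (m := 1) hu (by norm_num) v).differentiable one_ne_zero) x v
  simpa using sq_deriv_le_of_deriv_deriv_le hline hline' (L := L)
    (fun t ht => by simpa [← hess_apply hu] using hK _ (by simpa using ht)) hK0 (fun t => hL _)
    (by simpa using hsign)

end GradientBound

section PogorelovMaximum

variable {E : Type*} [NormedAddCommGroup E] [InnerProductSpace ℝ E] {u : E → ℝ} {x : E} {α : ℕ}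

/-- Pogorelov's test function `D²u(x)(e, e) (1 - u(x))^α exp(‖x‖² / 2)` on `{u < 1}`. -/
def pogorelov (α : ℕ) (u : E → ℝ) (x e : E) : ℝ :=
  hess u x e e * (1 - u x) ^ α * Real.exp (‖x‖ ^ 2 / 2)

lemma hess_mul_pow_le_pogorelov {e : E} (hu : u x ≤ 1) (he : 0 ≤ hess u x e e) :
    hess u x e e * (1 - u x) ^ α ≤ pogorelov α u x e :=
  le_mul_of_one_le_right (mul_nonneg he (pow_nonneg (sub_nonneg.2 hu) _))
    (Real.one_le_exp (by positivity))

lemma hasDerivAt_log_mul_pow_mul_exp {g : E → ℝ} (hg : Differentiable ℝ g)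
    (hu : Differentiable ℝ u) {v : E} (hv : ‖v‖ = 1) {t : ℝ} (hg0 : 0 < g (x + t • v))
    (hu0 : u (x + t • v) < 1) :
    HasDerivAt
      (fun t : ℝ => Real.log (g (x + t • v) * (1 - u (x + t • v)) ^ α
        * Real.exp (‖x + t • v‖ ^ 2 / 2)))
      (dirDeriv v g (x + t • v) / g (x + t • v)
        - α * (dirDeriv v u (x + t • v) / (1 - u (x + t • v))) + (⟪x, v⟫ + t)) t := by
  have hθ : 0 < 1 - u (x + t • v) := sub_pos.2 hu0
  have hline : HasDerivAt (fun t : ℝ => x + t • v) v t := by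
    simpa using ((hasDerivAt_id t).smul_const v).const_add x
  have hprod := ((hasDerivAt_comp_line hg x v t).mul
    (((hasDerivAt_comp_line hu x v t).const_sub 1).pow α)).mul (hline.norm_sq.div_const 2).exp
  refine (hprod.log (mul_pos (mul_pos hg0 (pow_pos hθ α)) (Real.exp_pos _)).ne').congr_deriv ?_
  rcases α with _ | k
  · simp [inner_add_left, inner_smul_left, hv]
    field_simp
  · simp [inner_add_left, inner_smul_left, hv]
    field_simp
    ring

section LocalMax

variable {g : E → ℝ} {v : E}

lemma eventually_pos_and_lt_one (hg : Continuous g) (hu : Continuous u) (hg0 : 0 < g x)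
    (hu0 : u x < 1) (v : E) : ∀ᶠ t : ℝ in 𝓝 0, 0 < g (x + t • v) ∧ u (x + t • v) < 1 := by
  have hline : Continuous fun t : ℝ => x + t • v := by fun_prop
  exact ((hg.comp hline).continuousAt.eventually_const_lt (by simpa using hg0)).and
    ((hu.comp hline).continuousAt.eventually_lt_const (by simpa using hu0))

lemma isLocalMax_log_comp_line (hg : Continuous g) (hu : Continuous u) (hg0 : 0 < g x)
    (hu0 : u x < 1)
    (hmax : IsLocalMax (fun y => g y * (1 - u y) ^ α * Real.exp (‖y‖ ^ 2 / 2)) x) (v : E) :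
    IsLocalMax (fun t : ℝ => Real.log (g (x + t • v) * (1 - u (x + t • v)) ^ α
      * Real.exp (‖x + t • v‖ ^ 2 / 2))) 0 := by
  have hmax_line := IsLocalMax.comp_continuous (g := fun t : ℝ => x + t • v) (b := 0)
    (by simpa using hmax) (by fun_prop)
  filter_upwards [eventually_pos_and_lt_one hg hu hg0 hu0 v, hmax_line] with t ht hle
  have hθ : 0 < 1 - u (x + t • v) := sub_pos.2 ht.2
  have := ht.1
  exact Real.log_le_log (by positivity) hle

lemma dirDeriv_div_eq_of_isLocalMax (hg : ContDiff ℝ 1 g) (hu : ContDiff ℝ 1 u) (hg0 : 0 < g x)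
    (hu0 : u x < 1)
    (hmax : IsLocalMax (fun y => g y * (1 - u y) ^ α * Real.exp (‖y‖ ^ 2 / 2)) x)
    (hv : ‖v‖ = 1) :
    dirDeriv v g x / g x = α * (dirDeriv v u x / (1 - u x)) - ⟪x, v⟫ := by
  have hderiv := (isLocalMax_log_comp_line hg.continuous hu.continuous hg0 hu0 hmax
    v).hasDerivAt_eq_zero (hasDerivAt_log_mul_pow_mul_exp (hg.differentiable one_ne_zero)
      (hu.differentiable one_ne_zero) hv (by simpa using hg0) (by simpa using hu0))
  simp only [zero_smul, add_zero] at hderiv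
  linarith

lemma hess_div_le_of_isLocalMax (hg : ContDiff ℝ 2 g) (hu : ContDiff ℝ 2 u) (hg0 : 0 < g x)
    (hu0 : u x < 1)
    (hmax : IsLocalMax (fun y => g y * (1 - u y) ^ α * Real.exp (‖y‖ ^ 2 / 2)) x)
    (hv : ‖v‖ = 1) :
    hess g x v v / g x ≤ (dirDeriv v g x / g x) ^ 2
      + α * (hess u x v v / (1 - u x) + (dirDeriv v u x / (1 - u x)) ^ 2) - 1 := by
  have hg' := hg.differentiable two_ne_zero
  have hu' := hu.differentiable two_ne_zero
  have hline {w : E → ℝ} (hw : ContDiff ℝ 2 w) :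
      HasDerivAt (fun t : ℝ => dirDeriv v w (x + t • v)) (hess w x v v) 0 := by
    simpa [hess_apply hw] using hasDerivAt_comp_line
      ((contDiff_dirDeriv (m := 1) hw (by norm_num) v).differentiable one_ne_zero) x v 0
  have hgx : g (x + (0 : ℝ) • v) ≠ 0 := by simpa using hg0.ne'
  have hux : 1 - u (x + (0 : ℝ) • v) ≠ 0 := by simpa using (sub_pos.2 hu0).ne'
  have hφ' := ((((hline hg).div (hasDerivAt_comp_line hg' x v 0) hgx).sub
    (((hline hu).div ((hasDerivAt_comp_line hu' x v 0).const_sub 1) hux).const_mul (α : ℝ))).add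
    ((hasDerivAt_id (0 : ℝ)).const_add ⟪x, v⟫)).neg
  have hnonneg := deriv_deriv_nonneg_of_isLocalMin
    (isLocalMax_log_comp_line hg.continuous hu.continuous hg0 hu0 hmax v).neg
    ((eventually_pos_and_lt_one hg.continuous hu.continuous hg0 hu0 v).mono fun t ht =>
      (hasDerivAt_log_mul_pow_mul_exp hg' hu' hv ht.1 ht.2).neg) hφ'
  simp only [zero_smul, add_zero] at hnonneg hgx hux
  refine sub_nonneg.1 (hnonneg.trans_eq ?_)
  field_simp
  ring

end LocalMax

section Maximum

variable {ι : Type*} [Fintype ι] {b : OrthonormalBasis ι ℝ E} {lam : ι → ℝ} {m : ι}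

/-- Pogorelov's test function on unit vectors over `{u ≤ 1}` is maximal, with a positive value, at
`x` in the direction `b m`. The orthonormal basis `b` diagonalizes `D²u(x)` with eigenvalues `lam`,
and `lam m` is the largest of them. -/
structure IsPogorelovMax (α : ℕ) (u : E → ℝ) (x : E) (b : OrthonormalBasis ι ℝ E) (lam : ι → ℝ)
    (m : ι) : Prop where
  isHessEigenbasis : IsHessEigenbasis u x b lam
  le_top : ∀ i, lam i ≤ lam m
  top_pos : 0 < lam m
  lt_one : u x < 1
  pogorelov_le : ∀ y v, ‖v‖ = 1 → u y ≤ 1 → pogorelov α u y v ≤ pogorelov α u x (b m)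

lemma IsHessEigenbasis.hess_self_le {K : ℝ} (hb : IsHessEigenbasis u x b lam)
    (hK : ∀ i, lam i ≤ K) (v : E) : hess u x v v ≤ K * ‖v‖ ^ 2 := by
  rw [hb.hess_self_eq_sum, ← b.sum_sq_inner_right v, Finset.mul_sum]
  refine Finset.sum_le_sum fun i _ => ?_
  rw [mul_comm]
  exact mul_le_mul_of_nonneg_right (hK i) (sq_nonneg _)

lemma IsPogorelovMax.pogorelov_eq (h : IsPogorelovMax α u x b lam m) :
    pogorelov α u x (b m) = lam m * (1 - u x) ^ α * Real.exp (‖x‖ ^ 2 / 2) := by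
  rw [pogorelov, h.isHessEigenbasis.hess_apply_basis]

lemma IsPogorelovMax.hess_mul_pow_le (h : IsPogorelovMax α u x b lam m) {y v : E} (hv : ‖v‖ = 1)
    (hy : u y ≤ 1) (hpos : 0 ≤ hess u y v v) :
    hess u y v v * (1 - u y) ^ α ≤ lam m * (1 - u x) ^ α * Real.exp (‖x‖ ^ 2 / 2) :=
  ((hess_mul_pow_le_pogorelov hy hpos).trans (h.pogorelov_le y v hv hy)).trans_eq h.pogorelov_eq

lemma IsPogorelovMax.hess_le_of_le (h : IsPogorelovMax α u x b lam m) {y v : E} (hv : ‖v‖ = 1)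
    (hy : u y ≤ u x) : hess u y v v ≤ lam m * Real.exp (‖x‖ ^ 2 / 2) := by
  have hl := h.top_pos
  have hθ : 0 < 1 - u x := sub_pos.2 h.lt_one
  rcases le_total (hess u y v v) 0 with hneg | hpos
  · exact hneg.trans (by positivity)
  refine le_of_mul_le_mul_right ?_ (pow_pos hθ α)
  calc hess u y v v * (1 - u x) ^ α ≤ hess u y v v * (1 - u y) ^ α := by gcongr
    _ ≤ lam m * (1 - u x) ^ α * Real.exp (‖x‖ ^ 2 / 2) :=
      h.hess_mul_pow_le hv (hy.trans h.lt_one.le) hpos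
    _ = lam m * Real.exp (‖x‖ ^ 2 / 2) * (1 - u x) ^ α := by ring

lemma IsPogorelovMax.sq_dirDeriv_le (h : IsPogorelovMax α u x b lam m) (hu : ContDiff ℝ 2 u)
    {L : ℝ} (hL : ∀ y, L ≤ u y) {v : E} (hv : ‖v‖ = 1) :
    dirDeriv v u x ^ 2 ≤ 2 * Real.exp (‖x‖ ^ 2 / 2) * (1 - L) * lam m := by
  have hl := h.top_pos
  have hgap : u x - L ≤ 1 - L := sub_le_sub_right h.lt_one.le L
  calc dirDeriv v u x ^ 2 ≤ 2 * (lam m * Real.exp (‖x‖ ^ 2 / 2)) * (u x - L) :=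
        sq_dirDeriv_le_of_hess_le hu hL (by positivity) fun y hy => h.hess_le_of_le hv hy
    _ ≤ 2 * (lam m * Real.exp (‖x‖ ^ 2 / 2)) * (1 - L) := by gcongr
    _ = 2 * Real.exp (‖x‖ ^ 2 / 2) * (1 - L) * lam m := by ring

lemma IsPogorelovMax.isLocalMax (h : IsPogorelovMax α u x b lam m) (hu : Continuous u) :
    IsLocalMax (fun y => hess u y (b m) (b m) * (1 - u y) ^ α * Real.exp (‖y‖ ^ 2 / 2)) x :=
  (hu.continuousAt.eventually_lt_const h.lt_one).mono fun y hy =>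
    h.pogorelov_le y (b m) (b.norm_eq_one m) hy.le

end Maximum

lemma exists_forall_pogorelov_le [ProperSpace E] (hu : ContDiff ℝ 2 u)
    (hcompact : IsCompact {y | u y ≤ 1}) {e : E} (he : ‖e‖ = 1) (hx : u x ≤ 1) :
    ∃ x₀ e₀, ‖e₀‖ = 1 ∧ u x₀ ≤ 1 ∧
      ∀ y v, ‖v‖ = 1 → u y ≤ 1 → pogorelov α u y v ≤ pogorelov α u x₀ e₀ := by
  have hhess : Continuous (hess u) := (contDiff_hess (m := 0) hu (by norm_num)).continuous
  have hcont : Continuous fun z : E × E => pogorelov α u z.1 z.2 := by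
    have := hu.continuous
    unfold pogorelov
    fun_prop
  obtain ⟨⟨x₀, e₀⟩, ⟨hx₀, he₀⟩, hmax⟩ := (hcompact.prod (isCompact_sphere (0 : E) 1)).exists_isMaxOn
    ⟨(x, e), by simpa using hx, by simpa using he⟩ hcont.continuousOn
  exact ⟨x₀, e₀, by simpa using he₀, by simpa using hx₀, fun y v hv hy =>
    hmax (a := (y, v)) ⟨by simpa using hy, by simpa using hv⟩⟩

lemma exists_isPogorelovMax {n : ℕ} {u : EuclideanSpace ℝ (Fin n) → ℝ} (hu : ContDiff ℝ 2 u)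
    (hcompact : IsCompact {y | u y ≤ 1}) (hα : α ≠ 0) {x e : EuclideanSpace ℝ (Fin n)}
    (he : ‖e‖ = 1) (hx : u x < 1) (hpos : 0 < hess u x e e) :
    ∃ x₀ b m, IsPogorelovMax α u x₀ b (hessEigen u x₀) m := by
  obtain ⟨x₀, e₀, he₀, hx₀, hmax⟩ := exists_forall_pogorelov_le (α := α) hu hcompact he hx.le
  have : 0 < 1 - u x := sub_pos.2 hx
  have hval : 0 < pogorelov α u x₀ e₀ :=
    lt_of_lt_of_le (by unfold pogorelov; positivity) (hmax x e he hx.le)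
  have hx₀' : u x₀ < 1 := hx₀.lt_of_ne fun h => by simp [pogorelov, h, hα] at hval
  have hθ₀ : 0 < 1 - u x₀ := sub_pos.2 hx₀'
  have he₀_pos : 0 < hess u x₀ e₀ e₀ := by
    rw [pogorelov, mul_assoc] at hval
    exact pos_of_mul_pos_left hval (by positivity)
  obtain ⟨b, hb⟩ := exists_isHessEigenbasis_hessEigen hu x₀
  have : Nonempty (Fin n) := by
    by_contra! hempty
    simp [hb.hess_self_eq_sum] at he₀_pos
  obtain ⟨m, hm⟩ := Finite.exists_max (hessEigen u x₀)
  have htop : hess u x₀ e₀ e₀ ≤ hessEigen u x₀ m := by simpa [he₀] using hb.hess_self_le hm e₀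
  refine ⟨x₀, b, m, hb, hm, he₀_pos.trans_le htop, hx₀', fun y v hv hy => ?_⟩
  refine (hmax y v hv hy).trans ?_
  rw [pogorelov, pogorelov, hb.hess_apply_basis]
  gcongr

end PogorelovMaximum

section WeightSum

lemma mul_sq_add_mul_sq_sub_one_le {f β y x α : ℝ} (hf : 0 ≤ f) (hα : 16 ≤ α)
    (hx : 8 * x ^ 2 ≤ α) (hβ : β = α * y - x) :
    f * (β ^ 2 + α * y ^ 2 - 1) ≤ 5 / 4 * f * β ^ 2 - 3 / 4 * f := by
  have hy : α * y ^ 2 ≤ β ^ 2 / 4 + 1 / 4 := by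
    refine le_of_mul_le_mul_left ?_ (by linarith : 0 < α)
    calc α * (α * y ^ 2) = (β + x) ^ 2 := by rw [hβ]; ring
      _ ≤ 2 * β ^ 2 + 2 * x ^ 2 := by linarith [sq_nonneg (β - x)]
      _ ≤ α * (β ^ 2 / 4 + 1 / 4) := by
        linarith [mul_nonneg (sub_nonneg.2 hα) (sq_nonneg β), sq_nonneg β]
  calc f * (β ^ 2 + α * y ^ 2 - 1) ≤ f * (β ^ 2 + (β ^ 2 / 4 + 1 / 4) - 1) := by gcongr
    _ = 5 / 4 * f * β ^ 2 - 3 / 4 * f := by ring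

lemma mul_sq_add_mul_sq_le {f β y x α l B D ρ : ℝ} (hf : 0 ≤ f) (hα : 0 ≤ α) (hl : 2 ≤ l)
    (hfB : f * l ≤ B) (hD : 0 ≤ D) (hy : y ^ 2 ≤ D * l) (hx : x ^ 2 ≤ ρ) (hβ : β = α * y - x) :
    f * (β ^ 2 + α * y ^ 2) ≤ B * ((2 * α ^ 2 + α) * D + ρ) := by
  have hρ : 0 ≤ ρ := (sq_nonneg x).trans hx
  have hsq : β ^ 2 + α * y ^ 2 ≤ (2 * α ^ 2 + α) * y ^ 2 + 2 * x ^ 2 := by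
    rw [hβ]
    linarith [sq_nonneg (α * y + x)]
  calc f * (β ^ 2 + α * y ^ 2) ≤ f * ((2 * α ^ 2 + α) * y ^ 2 + 2 * x ^ 2) := by gcongr
    _ ≤ f * ((2 * α ^ 2 + α) * (D * l) + l * ρ) := by gcongr
    _ = f * l * ((2 * α ^ 2 + α) * D + ρ) := by ring
    _ ≤ B * ((2 * α ^ 2 + α) * D + ρ) := by gcongr

/- The rotation coefficients `s j = ∂ⱼg / (lam m - lam j)`, with `g = D²u(b m, b m)`, minimize the
quadratic polynomial in `s j` of `IsMinimalFrame.sum_nonneg`. -/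
lemma IsMinimalFrame.sum_mul_sq_dirDeriv_le {E ι : Type*} [NormedAddCommGroup E]
    [InnerProductSpace ℝ E] [CompleteSpace E] [Fintype ι] {u : E → ℝ} {x : E}
    {b : OrthonormalBasis ι ℝ E} {f lam : ι → ℝ} {m : ι} {c : ℝ} {J : Finset ι}
    (hmin : IsMinimalFrame u x b f) (hb : IsHessEigenbasis u x b lam) (hu : ContDiff ℝ 4 u)
    (hl : 0 < lam m) (hJ : ∀ j ∈ J, lam j < lam m ∧
      c * f j ≤ 2 * lam m * ((f j - f m) / (lam m - lam j))) :
    ∑ j ∈ J, c * f j * (dirDeriv (b j) (fun y => hess u y (b m) (b m)) x / lam m) ^ 2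
      ≤ ∑ i, f i * (hess (fun y => hess u y (b m) (b m)) x (b i) (b i) / lam m) := by
  classical
  set g : E → ℝ := fun y => hess u y (b m) (b m)
  have hg_eq : dirDeriv (b m) (dirDeriv (b m) u) = g :=
    funext fun y => (hess_apply (hu.of_le (by norm_num)) y _ _).symm
  have hthird (j : ι) : hess (dirDeriv (b m) u) x (b j) (b m) = dirDeriv (b j) g x := by
    rw [hess_apply (contDiff_dirDeriv hu (by norm_num) _), hg_eq]
  set s : ι → ℝ := fun j => if j ∈ J then dirDeriv (b j) g x / (lam m - lam j) else 0 with hs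
  have hm : m ∉ J := fun h => lt_irrefl _ (hJ m h).1
  have hsum := hmin.sum_nonneg (s := s) (m := m) hb hu (by simp [hs, hm])
  simp only [hg_eq, hthird] at hsum
  have hrot : ∑ i, (f i - f m) * (2 * (lam m - lam i) * s i ^ 2 - 4 * s i * dirDeriv (b i) g x)
      ≤ -∑ j ∈ J, lam m * (c * f j * (dirDeriv (b j) g x / lam m) ^ 2) := by
    rw [← Finset.sum_neg_distrib, ← Finset.sum_subset J.subset_univ
      fun j _ hj => by simp [hs, hj]]
    refine Finset.sum_le_sum fun j hj => ?_
    have hgap : 0 < lam m - lam j := sub_pos.2 (hJ j hj).1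
    simp only [hs, if_pos hj]
    calc _ = -(2 * lam m * ((f j - f m) / (lam m - lam j)) * dirDeriv (b j) g x ^ 2) / lam m := by
          field_simp
          ring
      _ ≤ -(c * f j * dirDeriv (b j) g x ^ 2) / lam m :=
          div_le_div_of_nonneg_right (neg_le_neg
            (mul_le_mul_of_nonneg_right (hJ j hj).2 (sq_nonneg _))) hl.le
      _ = _ := by field_simp
  refine le_of_mul_le_mul_left ?_ hl
  calc lam m * ∑ j ∈ J, c * f j * (dirDeriv (b j) g x / lam m) ^ 2
      ≤ ∑ i, f i * hess g x (b i) (b i) := by rw [Finset.mul_sum]; linarith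
    _ = lam m * ∑ i, f i * (hess g x (b i) (b i) / lam m) := by
      rw [Finset.mul_sum]
      exact Finset.sum_congr rfl fun i _ => by field_simp

end WeightSum

section MaximumTerms

variable {E ι : Type*} [NormedAddCommGroup E] [InnerProductSpace ℝ E] [Fintype ι] {u : E → ℝ}
  {x : E} {α : ℕ} {b : OrthonormalBasis ι ℝ E} {lam : ι → ℝ} {m : ι}

lemma IsPogorelovMax.dirDeriv_hess_div_eq (h : IsPogorelovMax α u x b lam m)
    (hu : ContDiff ℝ 3 u) (i : ι) :
    dirDeriv (b i) (fun y => hess u y (b m) (b m)) x / lam m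
      = α * (dirDeriv (b i) u x / (1 - u x)) - ⟪x, b i⟫ := by
  have hgx := h.isHessEigenbasis.hess_apply_basis m
  rw [← hgx]
  exact dirDeriv_div_eq_of_isLocalMax (g := fun y => hess u y (b m) (b m))
    (contDiff_hess_apply hu (by norm_num) _ _) (hu.of_le (by norm_num)) (hgx ▸ h.top_pos) h.lt_one
    (h.isLocalMax hu.continuous) (b.norm_eq_one i)

lemma IsPogorelovMax.hess_hess_div_le (h : IsPogorelovMax α u x b lam m) (hu : ContDiff ℝ 4 u)
    (i : ι) :
    hess (fun y => hess u y (b m) (b m)) x (b i) (b i) / lam m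
      ≤ (dirDeriv (b i) (fun y => hess u y (b m) (b m)) x / lam m) ^ 2
        + α * (lam i / (1 - u x) + (dirDeriv (b i) u x / (1 - u x)) ^ 2) - 1 := by
  have hgx := h.isHessEigenbasis.hess_apply_basis m
  rw [← hgx, ← h.isHessEigenbasis.hess_apply_basis i]
  exact hess_div_le_of_isLocalMax (g := fun y => hess u y (b m) (b m))
    (contDiff_hess_apply hu (by norm_num) _ _) (hu.of_le (by norm_num)) (hgx ▸ h.top_pos) h.lt_one
    (h.isLocalMax hu.continuous) (b.norm_eq_one i)

lemma sq_inner_basis_le (b : OrthonormalBasis ι ℝ E) (x : E) (i : ι) : ⟪x, b i⟫ ^ 2 ≤ ‖x‖ ^ 2 := by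
  simpa [sq_abs] using pow_le_pow_left₀ (abs_nonneg _) (abs_real_inner_le_norm x (b i)) 2

lemma IsPogorelovMax.mul_hess_hess_div_le (h : IsPogorelovMax α u x b lam m)
    (hu : ContDiff ℝ 4 u) (hα : 16 ≤ (α : ℝ)) (hx : 8 * ‖x‖ ^ 2 ≤ α) {f : ℝ} (hf : 0 ≤ f) (i : ι) :
    f * (hess (fun y => hess u y (b m) (b m)) x (b i) (b i) / lam m)
      ≤ 5 / 4 * f * (dirDeriv (b i) (fun y => hess u y (b m) (b m)) x / lam m) ^ 2 - 3 / 4 * f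
        + α / (1 - u x) * (f * lam i) := by
  have hsecond := mul_le_mul_of_nonneg_left (h.hess_hess_div_le hu i) hf
  have habsorb := mul_sq_add_mul_sq_sub_one_le hf hα
    (by linarith [sq_inner_basis_le b x i]) (h.dirDeriv_hess_div_eq (hu.of_le (by norm_num)) i)
  linear_combination hsecond + habsorb

lemma IsPogorelovMax.mul_hess_hess_div_le_of_mul_le (h : IsPogorelovMax α u x b lam m)
    (hu : ContDiff ℝ 4 u) {L : ℝ} (hL : ∀ y, L ≤ u y) (hl : 2 ≤ lam m) {f B : ℝ} (hf : 0 ≤ f)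
    (hfB : f * lam m ≤ B) (i : ι) :
    f * (hess (fun y => hess u y (b m) (b m)) x (b i) (b i) / lam m)
      ≤ -f + α / (1 - u x) * (f * lam i) + B * ((2 * α ^ 2 + α)
        * (2 * Real.exp (‖x‖ ^ 2 / 2) * (1 - L) / (1 - u x) ^ 2) + ‖x‖ ^ 2) := by
  have hgrad : (dirDeriv (b i) u x / (1 - u x)) ^ 2
      ≤ 2 * Real.exp (‖x‖ ^ 2 / 2) * (1 - L) / (1 - u x) ^ 2 * lam m := by
    rw [div_pow, div_mul_eq_mul_div]
    gcongr
    exact h.sq_dirDeriv_le (hu.of_le (by norm_num)) hL (b.norm_eq_one i)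
  have hgap : 0 ≤ 1 - L := sub_nonneg.2 ((hL x).trans h.lt_one.le)
  have hsecond := mul_le_mul_of_nonneg_left (h.hess_hess_div_le hu i) hf
  have hbound := mul_sq_add_mul_sq_le hf (Nat.cast_nonneg α) hl hfB (by positivity) hgrad
    (sq_inner_basis_le b x i) (h.dirDeriv_hess_div_eq (hu.of_le (by norm_num)) i)
  linear_combination hsecond + hbound

end MaximumTerms

section PogorelovEstimate

variable {n p α : ℕ} {A L ρ : ℝ} {u : EuclideanSpace ℝ (Fin n) → ℝ}
  {x : EuclideanSpace ℝ (Fin n)}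
  {b : OrthonormalBasis (Fin n) ℝ (EuclideanSpace ℝ (Fin n))} {m : Fin n}

/-- Entire `p`-plurisubharmonic solutions of `M_p(D²u) = 1` for which every sum of `p - 1`
eigenvalues of `D²u` is at least `-A`. -/
structure IsPMASolution (p : ℕ) (A : ℝ) (u : EuclideanSpace ℝ (Fin n) → ℝ) : Prop where
  contDiff : ContDiff ℝ 4 u
  mem_gammaHat : ∀ x, hessEigen u x ∈ GammaHat n p
  pMA_eq_one : ∀ x, pMA n p (hessEigen u x) = 1
  neg_le_sum : ∀ x, ∀ s : Finset (Fin n), s.card = p - 1 → -A ≤ ∑ i ∈ s, hessEigen u x i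

lemma IsPMASolution.contDiff_two (h : IsPMASolution p A u) : ContDiff ℝ 2 u :=
  h.contDiff.of_le (by norm_num)

lemma IsPMASolution.isMinimalFrame (h : IsPMASolution p A u)
    (hb : IsHessEigenbasis u x b (hessEigen u x)) :
    IsMinimalFrame u x b (maWeight p (hessEigen u x)) := fun y b' => by
  simpa only [hb.hess_apply_basis, sum_maWeight_mul_self (h.mem_gammaHat x)] using
    choose_le_sum_maWeight_mul_hess h.contDiff_two h.mem_gammaHat h.pMA_eq_one x y b'

/- Summing the second-order conditions at the maximum in the directions `b i`, weighted by the
linearized operator. The first alternative of `maWeight_mul_le_or_le_quotient` bounds the terms of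
`i` outright; under the second one the third derivatives absorb them. -/
lemma IsPMASolution.sum_maWeight_le (h : IsPMASolution p A u) (hp : 2 ≤ p) (hA : 0 < A)
    (hmax : IsPogorelovMax α u x b (hessEigen u x) m) (hL : ∀ y, L ≤ u y)
    (hα : 16 ≤ (α : ℝ)) (hx : 8 * ‖x‖ ^ 2 ≤ α) (hl : 2 ≤ hessEigen u x m)
    (hlA : 16 * p * A ≤ hessEigen u x m) :
    3 / 4 * ∑ i, maWeight p (hessEigen u x) i ≤ α * n.choose p / (1 - u x)
      + n * (16 * p * n.choose p * ((2 * α ^ 2 + α)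
        * (2 * Real.exp (‖x‖ ^ 2 / 2) * (1 - L) / (1 - u x) ^ 2) + ‖x‖ ^ 2)) := by
  classical
  set lam := hessEigen u x
  set f := maWeight p lam
  set g := fun y => hess u y (b m) (b m)
  set R : ℝ := 16 * p * n.choose p * ((2 * α ^ 2 + α)
    * (2 * Real.exp (‖x‖ ^ 2 / 2) * (1 - L) / (1 - u x) ^ 2) + ‖x‖ ^ 2)
  have hf : ∀ i, 0 ≤ f i := maWeight_nonneg (h.mem_gammaHat x)
  have hfl : ∑ i, f i * lam i = n.choose p := sum_maWeight_mul_self (h.mem_gammaHat x)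
  have hR : 0 ≤ R := by
    have : 0 ≤ 1 - L := sub_nonneg.2 ((hL x).trans hmax.lt_one.le)
    positivity
  set J := Finset.univ.filter fun i => lam i < lam m ∧
    5 / 4 * f i ≤ 2 * lam m * ((f i - f m) / (lam m - lam i))
  have hthird : ∑ j ∈ J, 5 / 4 * f j * (dirDeriv (b j) g x / lam m) ^ 2
      ≤ ∑ i, f i * (hess g x (b i) (b i) / lam m) :=
    (h.isMinimalFrame hmax.isHessEigenbasis).sum_mul_sq_dirDeriv_le hmax.isHessEigenbasis
      h.contDiff hmax.top_pos fun j hj => by simpa [J] using hj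
  have hterm (i : Fin n) : f i * (hess g x (b i) (b i) / lam m)
      ≤ (if i ∈ J then 5 / 4 * f i * (dirDeriv (b i) g x / lam m) ^ 2 else 0) - 3 / 4 * f i
        + α / (1 - u x) * (f i * lam i) + R := by
    split_ifs with hi
    · linarith [hmax.mul_hess_hess_div_le h.contDiff hα hx (hf i) i]
    · have hfl := (maWeight_mul_le_or_le_quotient hp (h.mem_gammaHat x) hA (h.neg_le_sum x)
        hmax.le_top hlA i).resolve_right (by simpa [J] using hi)
      linarith [hf i, hmax.mul_hess_hess_div_le_of_mul_le h.contDiff hL hl (hf i) hfl i]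
  have hsum := hthird.trans (Finset.sum_le_sum fun i _ => hterm i)
  simp only [Finset.sum_add_distrib, Finset.sum_sub_distrib, ← Finset.mul_sum,
    Finset.sum_ite_mem, Finset.univ_inter, hfl, Finset.sum_const, Finset.card_univ,
    Fintype.card_fin, nsmul_eq_mul] at hsum
  rw [mul_div_right_comm]
  linarith

lemma exists_forall_sum_maWeight_mul_sq_le (hp : 2 ≤ p) (hA : 0 < A) (hα : 16 ≤ (α : ℝ))
    (hαρ : 8 * ρ ≤ α) :
    ∃ C : ℝ, ∀ u : EuclideanSpace ℝ (Fin n) → ℝ, IsPMASolution p A u → (∀ y, L ≤ u y) →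
      ∀ x b m, IsPogorelovMax α u x b (hessEigen u x) m → ‖x‖ ^ 2 ≤ ρ → 2 ≤ hessEigen u x m →
        16 * p * A ≤ hessEigen u x m →
        (∑ i, maWeight p (hessEigen u x) i) * (1 - u x) ^ 2 ≤ C := by
  refine ⟨4 / 3 * (α * n.choose p * (1 - L) + n * (16 * p * n.choose p * ((2 * α ^ 2 + α)
    * (2 * Real.exp (ρ / 2) * (1 - L)) + ρ * (1 - L) ^ 2))), fun u hu hL x b m hmax hx hl hlA => ?_⟩
  have hθ : 0 < 1 - u x := sub_pos.2 hmax.lt_one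
  have hθL : 1 - u x ≤ 1 - L := sub_le_sub_left (hL x) 1
  have hL0 : 0 ≤ 1 - L := hθ.le.trans hθL
  have hρ : 0 ≤ ρ := (sq_nonneg _).trans hx
  have hsum := mul_le_mul_of_nonneg_right
    (hu.sum_maWeight_le hp hA hmax hL hα (by linarith) hl hlA) (sq_nonneg (1 - u x))
  calc (∑ i, maWeight p (hessEigen u x) i) * (1 - u x) ^ 2
      ≤ 4 / 3 * ((α * n.choose p / (1 - u x) + n * (16 * p * n.choose p * ((2 * α ^ 2 + α)
        * (2 * Real.exp (‖x‖ ^ 2 / 2) * (1 - L) / (1 - u x) ^ 2) + ‖x‖ ^ 2)))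
          * (1 - u x) ^ 2) := by linarith
    _ = 4 / 3 * (α * n.choose p * (1 - u x) + n * (16 * p * n.choose p * ((2 * α ^ 2 + α)
        * (2 * Real.exp (‖x‖ ^ 2 / 2) * (1 - L)) + ‖x‖ ^ 2 * (1 - u x) ^ 2))) := by
      field_simp
    _ ≤ _ := by gcongr

lemma mul_pow_le_of_half_le_one_add_pow {S θ Θ l C : ℝ} {N k : ℕ} (hk : 2 * N ≤ k) (hθ : 0 < θ)
    (hΘ : θ ≤ Θ) (hS : 0 ≤ S) (hC : S * θ ^ 2 ≤ C) (hl : l / 2 ≤ (1 + S) ^ N) :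
    l * θ ^ k ≤ 2 * (Θ ^ 2 + C) ^ N * Θ ^ (k - 2 * N) := by
  have hbase : (1 + S) * θ ^ 2 ≤ Θ ^ 2 + C := by
    have : θ ^ 2 ≤ Θ ^ 2 := by gcongr
    linarith
  have hbase0 : 0 ≤ Θ ^ 2 + C := (by positivity : 0 ≤ (1 + S) * θ ^ 2).trans hbase
  have : 0 ≤ Θ := hθ.le.trans hΘ
  calc l * θ ^ k ≤ 2 * (1 + S) ^ N * θ ^ k := by gcongr; linarith
    _ = 2 * ((1 + S) * θ ^ 2) ^ N * θ ^ (k - 2 * N) := by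
      rw [mul_pow, ← pow_mul, mul_assoc, mul_assoc, mul_assoc, ← pow_add, Nat.add_sub_cancel' hk]
    _ ≤ 2 * (Θ ^ 2 + C) ^ N * Θ ^ (k - 2 * N) := by gcongr

lemma exists_forall_top_mul_pow_le (hp : 2 ≤ p) (hpn : p ≤ n) (hA : 0 < A) (hα : 16 ≤ (α : ℝ))
    (hαρ : 8 * ρ ≤ α) (hαN : 2 * n.choose p ≤ α) :
    ∃ K : ℝ, ∀ u : EuclideanSpace ℝ (Fin n) → ℝ, IsPMASolution p A u → (∀ y, L ≤ u y) →
      ∀ x b m, IsPogorelovMax α u x b (hessEigen u x) m → ‖x‖ ^ 2 ≤ ρ →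
        hessEigen u x m * (1 - u x) ^ α ≤ K := by
  obtain ⟨C, hC⟩ := exists_forall_sum_maWeight_mul_sq_le (n := n) (L := L) hp hA hα hαρ
  set T := 16 * p * A + 2
  refine ⟨max (T * (1 - L) ^ α)
    (2 * ((1 - L) ^ 2 + C) ^ n.choose p * (1 - L) ^ (α - 2 * n.choose p)),
    fun u hu hL x b m hmax hx => ?_⟩
  have hθ : 0 < 1 - u x := sub_pos.2 hmax.lt_one
  have hθL : 1 - u x ≤ 1 - L := sub_le_sub_left (hL x) 1
  have hpA : 2 * A ≤ 16 * p * A := by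
    have : (2 : ℝ) ≤ p := by exact_mod_cast hp
    nlinarith
  rcases le_total (hessEigen u x m) T with hsmall | hbig
  · exact le_max_of_le_left (by gcongr)
  · have hl : 2 ≤ hessEigen u x m := by linarith
    refine le_max_of_le_right (mul_pow_le_of_half_le_one_add_pow hαN hθ hθL
      (Finset.sum_nonneg fun i _ => maWeight_nonneg (hu.mem_gammaHat x) i)
      (hC u hu hL x b m hmax hx hl (by linarith)) ?_)
    exact half_le_pow_sum_maWeight (by lia) hpn (hu.mem_gammaHat x) (hu.pMA_eq_one x)
      (hu.neg_le_sum x) (by linarith) hl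

lemma exists_forall_pow_mul_hess_le (hp : 2 ≤ p) (hpn : p ≤ n) (hA : 0 < A) {C : ℝ} (hC : 0 < C) :
    ∃ (α : ℕ) (K : ℝ), 0 ≤ K ∧ ∀ u : EuclideanSpace ℝ (Fin n) → ℝ, IsPMASolution p A u →
      (∀ y, C⁻¹ * ‖y‖ ^ 2 - C ≤ u y) → ∀ x e, ‖e‖ = 1 → u x < 1 →
        (1 - u x) ^ α * hess u x e e ≤ K := by
  set ρ := C * (1 + C)
  set α : ℕ := 2 * n.choose p + 16 + ⌈8 * ρ⌉₊
  have hα16 : (16 : ℝ) ≤ α := by exact_mod_cast (by lia : 16 ≤ α)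
  have hαρ : 8 * ρ ≤ α := (Nat.le_ceil _).trans (by exact_mod_cast (by lia : ⌈8 * ρ⌉₊ ≤ α))
  obtain ⟨K, hK⟩ := exists_forall_top_mul_pow_le (n := n) (L := -C) hp hpn hA hα16 hαρ (by lia)
  refine ⟨α, max K 0 * Real.exp (ρ / 2), by positivity, fun u hu hlow x e he hx => ?_⟩
  have hL (y : EuclideanSpace ℝ (Fin n)) : -C ≤ u y := by
    have := hlow y
    have : 0 ≤ C⁻¹ * ‖y‖ ^ 2 := by positivity
    linarith
  have hball {y : EuclideanSpace ℝ (Fin n)} (hy : u y ≤ 1) : ‖y‖ ^ 2 ≤ ρ :=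
    (inv_mul_le_iff₀ hC).1 (by linarith [hlow y])
  have hcompact : IsCompact {y | u y ≤ 1} :=
    (isCompact_closedBall 0 (Real.sqrt ρ)).of_isClosed_subset
      (isClosed_le hu.contDiff.continuous continuous_const) fun y hy => by
        simpa using Real.le_sqrt_of_sq_le (hball (by simpa using hy))
  rcases le_or_gt (hess u x e e) 0 with hneg | hpos
  · exact (mul_nonpos_of_nonneg_of_nonpos (pow_nonneg (sub_pos.2 hx).le α) hneg).trans
      (by positivity)
  obtain ⟨x₀, b, m, hmax⟩ :=
    exists_isPogorelovMax hu.contDiff_two hcompact (by lia : α ≠ 0) he hx hpos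
  have hx₀ := hball hmax.lt_one.le
  calc (1 - u x) ^ α * hess u x e e = hess u x e e * (1 - u x) ^ α := mul_comm _ _
    _ ≤ hessEigen u x₀ m * (1 - u x₀) ^ α * Real.exp (‖x₀‖ ^ 2 / 2) :=
      hmax.hess_mul_pow_le he hx.le hpos.le
    _ ≤ max K 0 * Real.exp (ρ / 2) := by
      gcongr
      exact le_max_of_le_left (hK u hu hL x₀ b m hmax hx₀)

end PogorelovEstimate

section Scaling

variable {n p : ℕ} {A C r : ℝ} {u : EuclideanSpace ℝ (Fin n) → ℝ}

lemma hessEigen_rescale (hr : r ≠ 0) (x : EuclideanSpace ℝ (Fin n)) :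
    hessEigen (fun y => (r ^ 2)⁻¹ * u (r • y)) x = hessEigen u (r • x) := by
  have : hessianMatrix (fun y => (r ^ 2)⁻¹ * u (r • y)) x = hessianMatrix u (r • x) := by
    ext i j
    rw [hessianMatrix_apply, hessianMatrix_apply, hess_rescale u hr]
  unfold hessEigen
  rw [this]

lemma IsPMASolution.rescale (h : IsPMASolution p A u) (hr : r ≠ 0) :
    IsPMASolution p A fun y => (r ^ 2)⁻¹ * u (r • y) where
  contDiff := contDiff_const.mul (h.contDiff.comp (contDiff_id.const_smul r))
  mem_gammaHat x := by simpa only [hessEigen_rescale hr] using h.mem_gammaHat _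
  pMA_eq_one x := by simpa only [hessEigen_rescale hr] using h.pMA_eq_one _
  neg_le_sum x := by simpa only [hessEigen_rescale hr] using h.neg_le_sum _

/- Rescaling by `r = 1 + 2 |u x|` preserves the equation and moves the value of the solution at `x`
below `1 / 2`, where the interior estimate gives a bound independent of `x`. -/
lemma IsPMASolution.exists_forall_hess_le (h : IsPMASolution p A u) (hp : 2 ≤ p) (hpn : p ≤ n)
    (hA : 0 < A) (hC : 0 < C) (hlow : ∀ y, C⁻¹ * ‖y‖ ^ 2 - C ≤ u y) :
    ∃ K, ∀ x e, ‖e‖ = 1 → hess u x e e ≤ K := by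
  obtain ⟨α, K, hK, hKbound⟩ := exists_forall_pow_mul_hess_le hp hpn hA hC
  refine ⟨2 ^ α * K, fun x e he => ?_⟩
  obtain ⟨r, hr, hur⟩ : ∃ r : ℝ, 1 ≤ r ∧ 2 * u x ≤ r ^ 2 :=
    ⟨1 + 2 * |u x|, by linarith [abs_nonneg (u x)], by
      nlinarith [le_abs_self (u x), abs_nonneg (u x)]⟩
  have hr0 : r ≠ 0 := by positivity
  have hrx : r • r⁻¹ • x = x := smul_inv_smul₀ hr0 x
  set v := fun y => (r ^ 2)⁻¹ * u (r • y)
  have hv : v (r⁻¹ • x) ≤ 1 / 2 := by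
    simp only [v, hrx]
    rw [inv_mul_le_iff₀ (by positivity)]
    linarith
  have hvlow (y : EuclideanSpace ℝ (Fin n)) : C⁻¹ * ‖y‖ ^ 2 - C ≤ v y := by
    refine (le_inv_mul_iff₀ (by positivity)).2 (le_trans ?_ (hlow (r • y)))
    rw [norm_smul, mul_pow, Real.norm_eq_abs, sq_abs]
    nlinarith [one_le_pow₀ (n := 2) hr]
  have hbound := hKbound v (h.rescale hr0) hvlow (r⁻¹ • x) e he (by linarith)
  rw [hess_rescale u hr0, hrx] at hbound
  rcases le_or_gt (hess u x e e) 0 with hneg | hpos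
  · exact hneg.trans (by positivity)
  · have : (1 / 2 : ℝ) ^ α ≤ (1 - v (r⁻¹ • x)) ^ α := by gcongr; linarith
    calc hess u x e e = 2 ^ α * ((1 / 2) ^ α * hess u x e e) := by
          rw [← mul_assoc, ← mul_pow]; norm_num
      _ ≤ 2 ^ α * K := by gcongr; exact (by gcongr : _ ≤ _).trans hbound

end Scaling

section Main

variable {n p : ℕ} {A K : ℝ} {u : EuclideanSpace ℝ (Fin n) → ℝ}

lemma IsPMASolution.exists_isConcaveEllipticSolution (h : IsPMASolution p A u) (hp : 1 ≤ p)
    (hpn : p ≤ n) (hK : ∀ x e, ‖e‖ = 1 → hess u x e e ≤ K) :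
    ∃ c C : ℝ, 0 < c ∧ 0 < C ∧ IsConcaveEllipticSolution (Fin n) c C u := by
  obtain ⟨c, C, hc, hC, hbounds⟩ := exists_maWeight_bounds hp hpn (le_max_right K 1)
  refine ⟨c, C, hc, hC, fun x => ?_⟩
  obtain ⟨b, hb⟩ := exists_isHessEigenbasis_hessEigen h.contDiff_two x
  have hle (i : Fin n) : hessEigen u x i ≤ max K 1 := by
    rw [← hb.hess_apply_basis i]
    exact le_max_of_le_left (hK x _ (b.norm_eq_one i))
  exact ⟨b, maWeight p (hessEigen u x), hbounds _ (h.mem_gammaHat x) (h.pMA_eq_one x) hle,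
    fun y => h.isMinimalFrame hb y b⟩

end Main

theorem liouville_p_MA_lower_bound_general (n p : ℕ) (hp : 2 ≤ p) (hpn : p ≤ n)
    (u : EuclideanSpace ℝ (Fin n) → ℝ) (hu : ContDiff ℝ 4 u)
    (hadm : ∀ x, hessEigen u x ∈ GammaHat n p)
    (heq : ∀ x, pMA n p (hessEigen u x) = 1)
    (hquad : QuadraticGrowth u)
    (A : ℝ)
    (hsig : ∀ x, ∀ s : Finset (Fin n), s.card = p - 1 → -A ≤ ∑ i ∈ s, hessEigen u x i) :
    IsQuadraticPolynomial u := by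
  have h : IsPMASolution p (max A 1) u := ⟨hu, hadm, heq, fun x s hs =>
    (neg_le_neg (le_max_left A 1)).trans (hsig x s hs)⟩
  obtain ⟨C, hC, hlow⟩ := hquad
  obtain ⟨K, hK⟩ := h.exists_forall_hess_le hp hpn (by positivity) hC hlow
  obtain ⟨c, C', hc, hC', helliptic⟩ :=
    h.exists_isConcaveEllipticSolution (one_le_two.trans hp) hpn hK
  have hconst := helliptic.hess_eq hu hc hC' (K := fun e => K * ‖e‖ ^ 2) fun x e => by
    obtain ⟨b, hb⟩ := exists_isHessEigenbasis_hessEigen h.contDiff_two x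
    exact hb.hess_self_le (fun i => hb.hess_apply_basis i ▸ hK x _ (b.norm_eq_one i)) e
  exact isQuadraticPolynomial_of_forall_hess_eq h.contDiff_two fun x v => hconst x 0 v

/-- **Liouville theorem for the `p`-Monge–Ampère equation (weak version of
`(p−1)`-plurisubharmonicity).** A smooth entire `p`-plurisubharmonic solution of
`M_p(D²u) = 1` with quadratic growth such that all sums of `p−1` distinct eigenvalues of
`D²u` are bounded below by `−A` is a quadratic polynomial. -/
theorem liouville_p_MA_lower_bound (n p : ℕ) (hn : 2 ≤ n) (hp : 2 ≤ p) (hpn : p ≤ n)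
    (u : EuclideanSpace ℝ (Fin n) → ℝ) (hu : ContDiff ℝ (⊤ : ℕ∞) u)
    (hadm : ∀ x, hessEigen u x ∈ GammaHat n p)
    (heq : ∀ x, pMA n p (hessEigen u x) = 1)
    (hquad : QuadraticGrowth u)
    (A : ℝ) (hA : 0 < A)
    (hsig : ∀ x, ∀ s : Finset (Fin n), s.card = p - 1 → -A ≤ ∑ i ∈ s, hessEigen u x i) :
    IsQuadraticPolynomial u :=
  liouville_p_MA_lower_bound_general n p hp hpn u (contDiff_infty.1 hu 4) hadm heq hquad A hsig
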